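/- arXiv:1412.7976 — 3 statements merged into one kernel-verified Lean document; each statement's English description precedes it below -/
import Mathlib

section
/- Let N ≥ 2, let Ω ⊂ ℝ^N be an open set, let A₀ ≥ 0, and let u : Ω → ℝ be locally Lipschitz. Suppose that u is twice continuously differentiable with Δu = 0 on the open set {x ∈ Ω : u(x) < 1}, and that −Δu ≤ A₀ holds in the distributional sense on Ω, i.e. for every nonnegative smooth compactly supported φ : Ω → ℝ one has −∫_Ω u Δφ dx ≤ A₀ ∫_Ω φ dx. Then u is harmonic on the interior of the set {x ∈ Ω : u(x) ≤ 1}: on that open set u is smooth and Δu = 0. -/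
open MeasureTheory Metric Set

/-- The Laplacian: sum of second partial derivatives. -/
noncomputable def lap {N : ℕ} (u : EuclideanSpace ℝ (Fin N) → ℝ)
    (x : EuclideanSpace ℝ (Fin N)) : ℝ :=
  ∑ i : Fin N, fderiv ℝ (fun y => fderiv ℝ u y (EuclideanSpace.single i 1)) x
    (EuclideanSpace.single i 1)

abbrev EE (N : ℕ) := EuclideanSpace ℝ (Fin N)

noncomputable abbrev ee {N : ℕ} (i : Fin N) : EE N := EuclideanSpace.single i (1 : ℝ)

lemma integrable_mul_supp {N : ℕ} {V : Set (EE N)} (hV : IsOpen V) {a b : EE N → ℝ}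
    (ha : ContinuousOn a V) (hb : Continuous b) (hc : HasCompactSupport b)
    (hs : tsupport b ⊆ V) : Continuous (fun x => a x * b x) ∧
      HasCompactSupport (fun x => a x * b x) ∧ Integrable (fun x => a x * b x) := by
  have h1 : Continuous (fun x => a x * b x) := by
    apply continuous_of_tsupport
    intro x hx
    have hx' : x ∈ tsupport b := tsupport_mul_subset_right hx
    exact ((ha.continuousAt (hV.mem_nhds (hs hx')))).mul hb.continuousAt
  have h2 : HasCompactSupport (fun x => a x * b x) := hc.mul_left
  exact ⟨h1, h2, h1.integrable_of_hasCompactSupport h2⟩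

lemma partial_contDiffOn {N : ℕ} {V : Set (EE N)} (hV : IsOpen V) {f : EE N → ℝ} {m n : WithTop ℕ∞}
    (hf : ContDiffOn ℝ n f V) (hmn : m + 1 ≤ n) (e : EE N) :
    ContDiffOn ℝ m (fun y => fderiv ℝ f y e) V :=
  (hf.fderiv_of_isOpen hV hmn).clm_apply contDiffOn_const

lemma lap_continuousOn {N : ℕ} {V : Set (EE N)} (hV : IsOpen V) {f : EE N → ℝ}
    (hf : ContDiffOn ℝ 2 f V) : ContinuousOn (lap f) V := by
  unfold lap
  apply continuousOn_finsetSum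
  intro i _
  have h1 := partial_contDiffOn (m := 1) hV hf (by norm_num) (ee i)
  exact (partial_contDiffOn (m := 0) hV h1 (by norm_num) (ee i)).continuousOn

lemma tsupport_partial {N : ℕ} (φ : EE N → ℝ) (e : EE N) :
    tsupport (fun y => fderiv ℝ φ y e) ⊆ tsupport φ := by
  apply (closure_mono _).trans (tsupport_fderiv_subset ℝ (f := φ))
  intro x hx
  simp only [Function.mem_support] at hx ⊢
  intro h
  apply hx
  rw [h]; simp

lemma lap_congr_nhds {N : ℕ} {f g : EE N → ℝ} {x : EE N} (h : f =ᶠ[nhds x] g) :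
    lap f x = lap g x := by
  unfold lap
  apply Finset.sum_congr rfl
  intro i _
  have : (fun y => fderiv ℝ f y (ee i)) =ᶠ[nhds x] (fun y => fderiv ℝ g y (ee i)) := by
    filter_upwards [h.fderiv (𝕜 := ℝ)] with y hy
    rw [hy]
  rw [this.fderiv_eq]

lemma tsupport_lap {N : ℕ} (φ : EE N → ℝ) : tsupport (lap φ) ⊆ tsupport φ := by
  apply closure_minimal _ (isClosed_tsupport φ)
  intro x hx
  by_contra hn
  apply hx
  have : φ =ᶠ[nhds x] 0 := notMem_tsupport_iff_eventuallyEq.mp hn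
  rw [lap_congr_nhds this]
  simp [lap]

lemma lap_ibp {N : ℕ} {V : Set (EE N)} (hV : IsOpen V) {f φ : EE N → ℝ}
    (hf : ContDiffOn ℝ 2 f V) (hφ : ContDiff ℝ (⊤ : ℕ∞) φ) (hc : HasCompactSupport φ)
    (hs : tsupport φ ⊆ V) : ∫ x, f x * lap φ x = ∫ x, lap f x * φ x := by
  have hφ2 : ContDiff ℝ 2 φ := hφ.of_le (by norm_cast)
  have key : ∀ i : Fin N,
      Integrable (fun x => f x * fderiv ℝ (fun y => fderiv ℝ φ y (ee i)) x (ee i)) ∧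
      Integrable (fun x => fderiv ℝ (fun y => fderiv ℝ f y (ee i)) x (ee i) * φ x) ∧
      ∫ x, f x * fderiv ℝ (fun y => fderiv ℝ φ y (ee i)) x (ee i) =
        ∫ x, fderiv ℝ (fun y => fderiv ℝ f y (ee i)) x (ee i) * φ x := by
    intro i
    have hf1 := partial_contDiffOn (m := 1) hV hf (by norm_num) (ee i)
    have hf2 := partial_contDiffOn (m := 0) hV hf1 (by norm_num) (ee i)
    have hp1 : ContDiff ℝ 1 (fun y => fderiv ℝ φ y (ee i)) := by
      have := partial_contDiffOn (m := 1) isOpen_univ hφ2.contDiffOn (by norm_num) (ee i)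
      exact contDiffOn_univ.mp this
    have hp2 : ContDiff ℝ 0 (fun x => fderiv ℝ (fun y => fderiv ℝ φ y (ee i)) x (ee i)) := by
      have := partial_contDiffOn (m := 0) isOpen_univ hp1.contDiffOn (by norm_num) (ee i)
      exact contDiffOn_univ.mp this
    have s1 := tsupport_partial φ (ee i)
    have s2 := (tsupport_partial (fun y => fderiv ℝ φ y (ee i)) (ee i)).trans s1
    have c1 : HasCompactSupport (fun y => fderiv ℝ φ y (ee i)) :=
      hc.of_isClosed_subset (isClosed_tsupport _) s1
    have c2 : HasCompactSupport (fun x => fderiv ℝ (fun y => fderiv ℝ φ y (ee i)) x (ee i)) :=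
      hc.of_isClosed_subset (isClosed_tsupport _) s2
    have I1 := (integrable_mul_supp hV hf.continuousOn hp2.continuous c2 (s2.trans hs)).2.2
    have I2 := (integrable_mul_supp hV hf1.continuousOn hp1.continuous c1 (s1.trans hs)).2.2
    have I3 := (integrable_mul_supp hV hf2.continuousOn hφ.continuous hc hs).2.2
    have I4 := (integrable_mul_supp hV hf.continuousOn hp1.continuous c1 (s1.trans hs)).2.2
    have I5 := (integrable_mul_supp hV hf1.continuousOn hφ.continuous hc hs).2.2
    refine ⟨I1, I3, ?_⟩
    rw [integral_mul_fderiv_eq_neg_fderiv_mul_of_integrable I2 I1 I4,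
      integral_mul_fderiv_eq_neg_fderiv_mul_of_integrable I3 I2 I5, neg_neg]
    · intro x hx
      exact (hf1.contDiffAt (hV.mem_nhds (hs hx))).differentiableAt (by norm_num)
    · intro x _
      exact hφ2.contDiffAt.differentiableAt (by norm_num)
    · intro x hx
      exact (hf.contDiffAt (hV.mem_nhds (hs (s1 hx)))).differentiableAt (by norm_num)
    · intro x _
      exact hp1.contDiffAt.differentiableAt (by norm_num)
  unfold lap
  simp only [Finset.mul_sum, Finset.sum_mul]
  rw [integral_finsetSum _ (fun i _ => (key i).1), integral_finsetSum _ (fun i _ => (key i).2.1)]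
  exact Finset.sum_congr rfl (fun i _ => (key i).2.2)

/-- Laplacian of a composition. -/
lemma lap_comp {N : ℕ} {V : Set (EE N)} (hV : IsOpen V) {f : EE N → ℝ}
    (hf : ContDiffOn ℝ 2 f V) {b b' b'' : ℝ → ℝ} (hb : ∀ t, HasDerivAt b (b' t) t)
    (hb' : ∀ t, HasDerivAt b' (b'' t) t) {x : EE N} (hx : x ∈ V) :
    lap (fun y => b (f y)) x =
      b'' (f x) * ∑ i : Fin N, (fderiv ℝ f x (ee i)) ^ 2 + b' (f x) * lap f x := by
  unfold lap
  rw [Finset.mul_sum, Finset.mul_sum, ← Finset.sum_add_distrib]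
  apply Finset.sum_congr rfl
  intro i _
  have hd : ∀ y ∈ V, HasFDerivAt f (fderiv ℝ f y) y := fun y hy =>
    ((hf.contDiffAt (hV.mem_nhds hy)).differentiableAt (by norm_num)).hasFDerivAt
  have hf1 := partial_contDiffOn (m := 1) hV hf (by norm_num) (ee i)
  have hd1 := ((hf1.contDiffAt (hV.mem_nhds hx)).differentiableAt (by norm_num)).hasFDerivAt
  have e1 : (fun y => fderiv ℝ (fun z => b (f z)) y (ee i)) =ᶠ[nhds x]
      fun y => b' (f y) * fderiv ℝ f y (ee i) := by
    filter_upwards [hV.mem_nhds hx] with y hy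
    have h4 : fderiv ℝ (fun z => b (f z)) y = _ := ((hb (f y)).comp_hasFDerivAt y (hd y hy)).fderiv
    rw [h4]
    simp
  rw [e1.fderiv_eq]
  have h2 := ((hb' (f x)).comp_hasFDerivAt x (hd x hx)).mul hd1
  have h3 : fderiv ℝ (fun y => b' (f y) * fderiv ℝ f y (ee i)) x = _ := h2.fderiv
  rw [h3]
  simp
  ring

structure Profile (N : ℕ) where
  h : ℝ → ℝ
  g : ℝ → ℝ
  h_smooth : ContDiff ℝ (⊤ : ℕ∞) h
  g_smooth : ContDiff ℝ (⊤ : ℕ∞) g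
  h_deriv : ∀ s, HasDerivAt h (-(g s) / 2) s
  h_zero : ∀ s, 1 ≤ s → h s = 0
  g_zero : ∀ s, 1 ≤ s → g s = 0
  h_nonneg : ∀ s, 0 ≤ h s
  g_nonneg : ∀ s, 0 ≤ g s
  m : ℝ
  m_pos : 0 < m
  m_le : ∀ s, 0 ≤ s → s ≤ 4 / 9 → m ≤ g s
  int_one : ∫ z : EE N, g (‖z‖ ^ 2) = 1

lemma radial_compact {N : ℕ} {g : ℝ → ℝ} (hg : ∀ s, 1 ≤ s → g s = 0) :
    HasCompactSupport (fun z : EE N => g (‖z‖ ^ 2)) := by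
  apply HasCompactSupport.intro (isCompact_closedBall (0 : EE N) 1)
  intro x hx
  apply hg
  simp only [mem_closedBall, dist_zero_right, not_le] at hx
  nlinarith

lemma deriv_glue_pos {t : ℝ} (ht : 0 < t) : 0 < deriv expNegInvGlue t := by
  have e : expNegInvGlue =ᶠ[nhds t] fun t => Real.exp (-t⁻¹) := by
    filter_upwards [lt_mem_nhds ht] with s hs
    simp [expNegInvGlue, not_le.mpr hs]
  rw [e.deriv_eq]
  have := ((hasDerivAt_inv ht.ne').neg).exp
  have h2 : deriv (fun t : ℝ => Real.exp (-t⁻¹)) t = _ := this.deriv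
  rw [h2]
  simp only [neg_neg, Pi.neg_apply]
  positivity

lemma exists_profile (N : ℕ) : Nonempty (Profile N) := by
  have H : ContDiff ℝ (⊤ : ℕ∞) expNegInvGlue := expNegInvGlue.contDiff
  have H' : ContDiff ℝ (⊤ : ℕ∞) (deriv expNegInvGlue) := (contDiff_infty_iff_deriv.mp H).2
  set g0 : ℝ → ℝ := fun s => 2 * deriv expNegInvGlue (1 - s) with hg0
  have g0s : ContDiff ℝ (⊤ : ℕ∞) g0 := contDiff_const.mul (H'.comp (contDiff_const.sub contDiff_id))
  have g0pos : ∀ s, s < 1 → 0 < g0 s := fun s hs =>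
    mul_pos two_pos (deriv_glue_pos (by linarith))
  have g0nn : ∀ s, 0 ≤ g0 s := fun s =>
    mul_nonneg two_pos.le (expNegInvGlue.monotone.deriv_nonneg)
  have g0z : ∀ s, 1 ≤ s → g0 s = 0 := by
    intro s hs
    rcases hs.lt_or_eq with hs | hs
    · have e : expNegInvGlue =ᶠ[nhds (1 - s)] fun _ => 0 := by
        filter_upwards [gt_mem_nhds (show 1 - s < 0 by linarith)] with t ht
        exact expNegInvGlue.zero_of_nonpos ht.le
      simp [hg0, e.deriv_eq]
    · have : IsLocalMin expNegInvGlue 0 := by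
        filter_upwards with t
        simpa using expNegInvGlue.nonneg t
      simp [hg0, ← hs, this.deriv_eq_zero]
  have cs := radial_compact (N := N) g0z
  have cont : Continuous (fun z : EE N => g0 (‖z‖ ^ 2)) :=
    g0s.continuous.comp (by fun_prop)
  have Mpos : 0 < ∫ z : EE N, g0 (‖z‖ ^ 2) := by
    apply cont.integral_pos_of_hasCompactSupport_nonneg_nonzero cs (fun z => g0nn _) (x := 0)
    simpa using (g0pos 0 (by norm_num)).ne'
  set M := ∫ z : EE N, g0 (‖z‖ ^ 2) with hM
  obtain ⟨s0, hs0, hmin⟩ := (isCompact_Icc (a := (0:ℝ)) (b := 4/9)).exists_isMinOn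
    ⟨0, by norm_num⟩ (g0s.continuous.continuousOn)
  refine ⟨⟨fun s => expNegInvGlue (1 - s) / M, fun s => g0 s / M, ?_, ?_, ?_, ?_, ?_, ?_, ?_,
    g0 s0 / M, ?_, ?_, ?_⟩⟩
  · exact (H.comp (contDiff_const.sub contDiff_id)).div_const _
  · exact g0s.div_const _
  · intro s
    have h1 : HasDerivAt expNegInvGlue (deriv expNegInvGlue (1 - s)) (1 - s) :=
      (H.differentiable (by simp)).differentiableAt.hasDerivAt
    have h2 := (h1.comp s ((hasDerivAt_id s).const_sub 1)).div_const M
    refine h2.congr_deriv ?_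
    show _ = -((2 * deriv expNegInvGlue (1 - s)) / M) / 2
    ring
  · intro s hs
    simp [expNegInvGlue.zero_of_nonpos (show 1 - s ≤ 0 by linarith)]
  · intro s hs
    simp [g0z s hs]
  · intro s
    exact div_nonneg (expNegInvGlue.nonneg _) Mpos.le
  · intro s
    exact div_nonneg (g0nn _) Mpos.le
  · have := g0pos s0 (by linarith [hs0.2])
    positivity
  · intro s h1 h2
    have := hmin (show s ∈ Icc (0:ℝ) (4/9) from ⟨h1, h2⟩)
    exact div_le_div_of_nonneg_right this Mpos.le
  · rw [integral_div]
    exact div_self Mpos.ne'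

namespace Profile
variable {N : ℕ} (P : Profile N)

/-- bump `y ↦ h (c² |y-x|²)` -/
noncomputable def psi (x : EE N) (c : ℝ) (y : EE N) : ℝ := P.h (c ^ 2 * ‖y - x‖ ^ 2)

/-- averaging kernel -/
noncomputable def ker (c : ℝ) (z : EE N) : ℝ := c ^ N * P.g (c ^ 2 * ‖z‖ ^ 2)

noncomputable def avg (w : EE N → ℝ) (x : EE N) (c : ℝ) : ℝ := ∫ y, w y * P.ker c (x - y)

lemma psi_smooth (x : EE N) (c : ℝ) : ContDiff ℝ (⊤ : ℕ∞) (P.psi x c) := by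
  unfold psi
  exact P.h_smooth.comp (contDiff_const.mul ((contDiff_id.sub contDiff_const).norm_sq ℝ))

lemma psi_tsupport (x : EE N) {c : ℝ} (hc : 0 < c) : tsupport (P.psi x c) ⊆ closedBall x c⁻¹ := by
  apply closure_minimal _ isClosed_closedBall
  intro y hy
  by_contra hn
  apply hy
  apply P.h_zero
  rw [mem_closedBall, not_le, dist_eq_norm, inv_lt_iff_one_lt_mul₀ hc] at hn
  nlinarith

lemma psi_compact (x : EE N) {c : ℝ} (hc : 0 < c) : HasCompactSupport (P.psi x c) :=
  (isCompact_closedBall x c⁻¹).of_isClosed_subset (isClosed_tsupport _) (P.psi_tsupport x hc)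

lemma psi_nonneg (x : EE N) (c : ℝ) (y : EE N) : 0 ≤ P.psi x c y := P.h_nonneg _

lemma ker_nonneg {c : ℝ} (hc : 0 < c) (z : EE N) : 0 ≤ P.ker c z :=
  mul_nonneg (by positivity) (P.g_nonneg _)

lemma ker_zero {c : ℝ} (hc : 0 < c) {z : EE N} (hz : c⁻¹ ≤ ‖z‖) : P.ker c z = 0 := by
  unfold ker
  rw [P.g_zero, mul_zero]
  rw [inv_le_iff_one_le_mul₀ hc] at hz
  nlinarith

lemma ker_smooth (c : ℝ) : ContDiff ℝ (⊤ : ℕ∞) (P.ker c) := by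
  unfold ker
  exact contDiff_const.mul (P.g_smooth.comp (contDiff_const.mul (contDiff_id.norm_sq ℝ)))

lemma psi_integral (x : EE N) {c : ℝ} (hc : 0 < c) :
    ∫ y, P.psi x c y = (∫ z : EE N, P.h (‖z‖ ^ 2)) / c ^ N := by
  unfold psi
  rw [integral_sub_right_eq_self (fun y : EE N => P.h (c ^ 2 * ‖y‖ ^ 2)) x]
  have := Measure.integral_comp_smul (volume : Measure (EE N)) (fun z : EE N => P.h (‖z‖ ^ 2)) c
  simp only [norm_smul, Real.norm_eq_abs, mul_pow, sq_abs, finrank_euclideanSpace_fin] at this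
  rw [this, abs_of_pos (by positivity), smul_eq_mul]
  ring

lemma psi_lap (x : EE N) (c : ℝ) (y : EE N) :
    lap (P.psi x c) y = - c ^ 2 * (2 * (c ^ 2 * ‖y - x‖ ^ 2) * deriv P.g (c ^ 2 * ‖y - x‖ ^ 2)
      + N * P.g (c ^ 2 * ‖y - x‖ ^ 2)) := by
  have hg : ∀ t, HasDerivAt (fun s => -(P.g s) / 2) (-(deriv P.g t) / 2) t := fun t =>
    ((P.g_smooth.differentiable (by simp)).differentiableAt.hasDerivAt).neg.div_const 2
  set f : EE N → ℝ := fun y => c ^ 2 * ‖y - x‖ ^ 2 with hf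
  have fs : ContDiff ℝ 2 f := contDiff_const.mul ((contDiff_id.sub contDiff_const).norm_sq ℝ)
  have hfd : ∀ y i, fderiv ℝ f y (ee i) = 2 * c ^ 2 * (y i - x i) := by
    intro y i
    have h1 : HasFDerivAt (fun y : EE N => y - x) (ContinuousLinearMap.id ℝ (EE N)) y :=
      (hasFDerivAt_id y).sub_const x
    have h2 := (h1.norm_sq).const_mul (c ^ 2)
    have h3 : fderiv ℝ f y = _ := h2.fderiv
    rw [h3]
    simp [EuclideanSpace.inner_single_right]
    ring
  have hlap : lap f y = 2 * N * c ^ 2 := by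
    unfold lap
    have : ∀ i : Fin N, fderiv ℝ (fun y => fderiv ℝ f y (ee i)) y (ee i) = 2 * c ^ 2 := by
      intro i
      simp only [hfd]
      have h1 : HasFDerivAt (fun y : EE N => y i - x i) (EuclideanSpace.proj i : EE N →L[ℝ] ℝ) y :=
        ((EuclideanSpace.proj i : EE N →L[ℝ] ℝ).hasFDerivAt).sub_const _
      have h2 := h1.const_mul (2 * c ^ 2)
      rw [h2.fderiv]
      simp
    simp only [this]
    simp
    ring
  have := lap_comp isOpen_univ fs.contDiffOn P.h_deriv hg (mem_univ y)
  have e : lap (P.psi x c) y = lap (fun y => P.h (f y)) y := rfl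
  rw [e, this, hlap]
  have hsum : ∑ i : Fin N, (fderiv ℝ f y (ee i)) ^ 2 = 4 * c ^ 4 * ‖y - x‖ ^ 2 := by
    simp only [hfd]
    rw [EuclideanSpace.norm_sq_eq, Finset.mul_sum]
    apply Finset.sum_congr rfl
    intro i _
    simp
    ring
  rw [hsum]
  simp only [hf]
  ring

lemma g_bdd : ∃ B, 0 < B ∧ ∀ s, 0 ≤ s → P.g s ≤ B ∧
    |N * P.g s + 2 * s * deriv P.g s| ≤ B := by
  have c2 : Continuous (deriv P.g) := (contDiff_infty_iff_deriv.mp P.g_smooth).2.continuous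
  have c1 := P.g_smooth.continuous
  obtain ⟨B1, hB1⟩ := (isCompact_Icc (a := (0:ℝ)) (b := 1)).exists_bound_of_continuousOn
    (f := P.g) c1.continuousOn
  obtain ⟨B2, hB2⟩ := (isCompact_Icc (a := (0:ℝ)) (b := 1)).exists_bound_of_continuousOn
    (f := fun s => N * P.g s + 2 * s * deriv P.g s) (by fun_prop)
  refine ⟨max (max B1 B2) 1, by positivity, ?_⟩
  intro s hs
  rcases le_or_gt s 1 with h | h
  · have a1 := hB1 s ⟨hs, h⟩
    have a2 := hB2 s ⟨hs, h⟩
    rw [Real.norm_eq_abs] at a1 a2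
    exact ⟨(le_abs_self _).trans (a1.trans (by simp)), a2.trans (by simp)⟩
  · have e : P.g =ᶠ[nhds s] fun _ => 0 := by
      filter_upwards [lt_mem_nhds h] with t ht using P.g_zero t ht.le
    rw [P.g_zero s h.le, e.deriv_eq]
    simp

end Profile

namespace Profile
open Filter Topology
variable {N : ℕ} (P : Profile N)

lemma ker_bdd {c : ℝ} (hc : 0 < c) : ∃ B, ∀ z : EE N, ‖P.ker c z‖ ≤ B := by
  obtain ⟨B, hB, h⟩ := P.g_bdd
  refine ⟨c ^ N * B, fun z => ?_⟩
  rw [Real.norm_eq_abs, abs_of_nonneg (P.ker_nonneg hc z)]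
  exact mul_le_mul_of_nonneg_left (h _ (by positivity)).1 (by positivity)

lemma avg_integrable {w : EE N → ℝ} (hw : Integrable w) (x : EE N) {c : ℝ} (hc : 0 < c) :
    Integrable (fun y => w y * P.ker c (x - y)) := by
  obtain ⟨B, hB⟩ := P.ker_bdd hc
  refine hw.mul_bdd (c := B) ?_ ?_
  · exact ((P.ker_smooth c).continuous.comp (by fun_prop)).aestronglyMeasurable
  · exact Eventually.of_forall fun y => hB _

lemma avg_hasDerivAt (hN : 1 ≤ N) {w : EE N → ℝ} (hw : Integrable w) (x : EE N) {c₀ : ℝ}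
    (hc₀ : 0 < c₀) :
    HasDerivAt (fun c => P.avg w x c) (-(c₀ ^ N / c₀ ^ 3) * ∫ y, w y * lap (P.psi x c₀) y) c₀ := by
  obtain ⟨B, hB, hbd⟩ := P.g_bdd
  have c2 : Continuous (deriv P.g) := (contDiff_infty_iff_deriv.mp P.g_smooth).2.continuous
  have c1 := P.g_smooth.continuous
  set F' : ℝ → EE N → ℝ := fun c y => w y * (c ^ (N - 1) * (N * P.g (c ^ 2 * ‖x - y‖ ^ 2) +
    2 * (c ^ 2 * ‖x - y‖ ^ 2) * deriv P.g (c ^ 2 * ‖x - y‖ ^ 2))) with hF'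
  have key := hasDerivAt_integral_of_dominated_loc_of_deriv_le (μ := (volume : Measure (EE N)))
    (F := fun c y => w y * P.ker c (x - y)) (F' := F') (x₀ := c₀) (s := ball c₀ (c₀ / 2))
    (bound := fun y => |w y| * ((2 * c₀) ^ (N - 1) * B))
    (ball_mem_nhds _ (by positivity)) ?_ (P.avg_integrable hw x hc₀) ?_ ?_ ?_ ?_
  · have h2 := key.2
    unfold avg
    refine h2.congr_deriv ?_
    rw [← integral_const_mul]
    congr 1
    ext y
    rw [P.psi_lap, norm_sub_rev y x]
    simp only [hF']
    obtain ⟨k, rfl⟩ : ∃ k, N = k + 1 := ⟨N - 1, by omega⟩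
    simp only [Nat.add_sub_cancel]
    field_simp
    ring
  · filter_upwards [lt_mem_nhds hc₀] with c hc
    exact (P.avg_integrable hw x hc).aestronglyMeasurable
  · apply hw.aestronglyMeasurable.mul
    apply Continuous.aestronglyMeasurable
    fun_prop
  · refine Eventually.of_forall fun y c hc => ?_
    rw [mem_ball, Real.dist_eq, abs_lt] at hc
    have hcp : 0 < c := by linarith
    simp only [hF', norm_mul, Real.norm_eq_abs]
    apply mul_le_mul_of_nonneg_left _ (abs_nonneg _)
    apply mul_le_mul _ (hbd _ (by positivity)).2 (abs_nonneg _) (by positivity)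
    rw [abs_of_pos (by positivity)]
    exact pow_le_pow_left₀ hcp.le (by linarith) _
  · exact hw.abs.mul_const _
  · refine Eventually.of_forall fun y c hc => ?_
    simp only [ker, hF']
    apply HasDerivAt.const_mul
    have h1 : HasDerivAt (fun c : ℝ => c ^ 2 * ‖x - y‖ ^ 2) (2 * c * ‖x - y‖ ^ 2) c := by
      simpa using (hasDerivAt_pow 2 c).mul_const (‖x - y‖ ^ 2)
    have h2 : HasDerivAt P.g (deriv P.g (c ^ 2 * ‖x - y‖ ^ 2)) (c ^ 2 * ‖x - y‖ ^ 2) :=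
      (P.g_smooth.differentiable (by simp)).differentiableAt.hasDerivAt
    have h3 := (hasDerivAt_pow N c).mul (h2.comp c h1)
    refine h3.congr_deriv ?_
    obtain ⟨k, rfl⟩ : ∃ k, N = k + 1 := ⟨N - 1, by omega⟩
    simp only [Nat.add_sub_cancel, Function.comp]
    ring

lemma avg_tendsto {w : EE N → ℝ} (hw : Integrable w) {x : EE N}
    (hx : ContinuousAt w x) :
    Tendsto (fun c => P.avg w x c) atTop (𝓝 (w x)) := by
  have := tendsto_integral_comp_smul_smul_of_integrable' (μ := (volume : Measure (EE N)))
    (φ := fun z : EE N => P.g (‖z‖ ^ 2)) (fun z => P.g_nonneg _) P.int_one ?_ hw hx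
  · refine this.congr fun c => ?_
    unfold avg ker
    congr 1
    ext y
    simp only [norm_smul, Real.norm_eq_abs, mul_pow, sq_abs, finrank_euclideanSpace_fin,
      smul_eq_mul]
    ring
  · apply tendsto_const_nhds.congr'
    have : ∀ᶠ z : EE N in Bornology.cobounded (EE N), 1 ≤ ‖z‖ :=
      tendsto_norm_cobounded_atTop.eventually_ge_atTop 1
    filter_upwards [this] with z hz
    rw [P.g_zero _ (by nlinarith), mul_zero]

/-- total mass of `h(|z|²)` -/
noncomputable def H : ℝ := ∫ z : EE N, P.h (‖z‖ ^ 2)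

lemma H_nonneg : 0 ≤ P.H := integral_nonneg fun _ => P.h_nonneg _

lemma avg_le (hN : 1 ≤ N) {w : EE N → ℝ} (hw : Integrable w) {x : EE N}
    (hx : ContinuousAt w x) {A c₀ : ℝ} (hc₀ : 0 < c₀)
    (h : ∀ c, c₀ ≤ c → ∫ y, w y * lap (P.psi x c) y ≤ A * ∫ y, P.psi x c y) :
    P.avg w x c₀ ≤ w x + A * P.H / (2 * c₀ ^ 2) := by
  set q : ℝ → ℝ := fun c => P.avg w x c - A * P.H / 2 * (c ^ 2)⁻¹ with hq
  have hd : ∀ c, 0 < c → HasDerivAt q (-(c ^ N / c ^ 3) * (∫ y, w y * lap (P.psi x c) y)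
      + A * P.H / c ^ 3) c := by
    intro c hc
    have h1 : HasDerivAt (fun c : ℝ => (c ^ 2)⁻¹) (-(2 * c) / (c ^ 2) ^ 2) c := by
      have := (hasDerivAt_pow 2 c).inv (by positivity)
      refine this.congr_deriv ?_
      simp
    have h2 := (P.avg_hasDerivAt hN hw x hc).sub (h1.const_mul (A * P.H / 2))
    refine h2.congr_deriv ?_
    field_simp
    ring
  have mono : MonotoneOn q (Ici c₀) := by
    apply monotoneOn_of_deriv_nonneg (convex_Ici c₀)
    · intro c hc
      exact (hd c (hc₀.trans_le hc)).continuousAt.continuousWithinAt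
    · intro c hc
      rw [interior_Ici] at hc
      exact (hd c (hc₀.trans hc)).differentiableAt.differentiableWithinAt
    · intro c hc
      rw [interior_Ici] at hc
      have hcp : 0 < c := hc₀.trans hc
      rw [(hd c hcp).deriv]
      have h1 := h c (le_of_lt hc)
      rw [P.psi_integral x hcp] at h1
      have h2 := mul_le_mul_of_nonneg_left h1 (show 0 ≤ c ^ N / c ^ 3 by positivity)
      have h3 : c ^ N / c ^ 3 * (A * ((∫ z : EE N, P.h (‖z‖ ^ 2)) / c ^ N)) = A * P.H / c ^ 3 := by
        unfold H
        field_simp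
      linarith
  have lim : Tendsto q atTop (𝓝 (w x - A * P.H / 2 * 0)) := by
    apply (P.avg_tendsto hw hx).sub
    apply Tendsto.const_mul
    exact tendsto_inv_atTop_zero.comp (tendsto_pow_atTop (by norm_num))
  have := ge_of_tendsto lim (b := q c₀) (by
    filter_upwards [eventually_ge_atTop c₀] with c hc
    exact mono (mem_Ici.mpr le_rfl) hc hc)
  simp only [hq] at this
  have e : A * P.H / (2 * c₀ ^ 2) = A * P.H / 2 * (c₀ ^ 2)⁻¹ := by field_simp
  rw [e]
  linarith

lemma avg_eq (hN : 1 ≤ N) {w : EE N → ℝ} (hw : Integrable w) {x : EE N}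
    (hx : ContinuousAt w x) {c₀ : ℝ} (hc₀ : 0 < c₀)
    (h : ∀ c, c₀ ≤ c → ∫ y, w y * lap (P.psi x c) y = 0) :
    P.avg w x c₀ = w x := by
  apply le_antisymm
  · have := P.avg_le (A := 0) hN hw hx hc₀ (fun c hc => by rw [h c hc]; simp)
    simpa using this
  · have := P.avg_le (A := 0) hN hw.neg hx.neg hc₀ (fun c hc => by
      simp only [Pi.neg_apply, neg_mul, integral_neg]
      rw [h c hc]; simp)
    simp only [avg, Pi.neg_apply, neg_mul, integral_neg, zero_mul, zero_div, add_zero,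
      neg_le_neg_iff] at this
    exact this

/-- Distributional harmonicity on an open set. -/
def _root_.DHarm {N : ℕ} (w : EE N → ℝ) (V : Set (EE N)) : Prop :=
  ∀ φ : EE N → ℝ, ContDiff ℝ (⊤ : ℕ∞) φ → HasCompactSupport φ → tsupport φ ⊆ V →
    ∫ y, w y * lap φ y = 0

lemma mean_value (hN : 1 ≤ N) {w : EE N → ℝ} (hw : Integrable w) {V : Set (EE N)}
    (hV : IsOpen V) (hcont : ContinuousOn w V) (hd : DHarm w V) {x : EE N} {c : ℝ} (hc : 0 < c)
    (hb : closedBall x c⁻¹ ⊆ V) : P.avg w x c = w x := by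
  have hxV : x ∈ V := hb (mem_closedBall_self (by positivity))
  apply P.avg_eq hN hw (hcont.continuousAt (hV.mem_nhds hxV)) hc
  intro c' hc'
  have hcp : 0 < c' := hc.trans_le hc'
  apply hd _ (P.psi_smooth x c') (P.psi_compact x hcp)
  refine (P.psi_tsupport x hcp).trans ((closedBall_subset_closedBall ?_).trans hb)
  exact inv_anti₀ hc hc'

lemma avg_smooth {w : EE N → ℝ} (hw : Integrable w) {c : ℝ} (hc : 0 < c) :
    ContDiff ℝ (⊤ : ℕ∞) (fun x => P.avg w x c) := by
  have hcs : HasCompactSupport (P.ker c) := by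
    apply HasCompactSupport.intro (isCompact_closedBall (0 : EE N) c⁻¹)
    intro z hz
    rw [mem_closedBall, dist_zero_right, not_le] at hz
    exact P.ker_zero hc hz.le
  exact hcs.contDiff_convolution_right (ContinuousLinearMap.mul ℝ ℝ) hw.locallyIntegrable
    (P.ker_smooth c)

lemma weyl (hN : 1 ≤ N) {w : EE N → ℝ} (hw : Integrable w) {V : Set (EE N)}
    (hV : IsOpen V) (hcont : ContinuousOn w V) (hd : DHarm w V) :
    ContDiffOn ℝ (⊤ : ℕ∞) w V ∧ ∀ x ∈ V, lap w x = 0 := by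
  obtain ⟨P⟩ := exists_profile N
  have hs : ContDiffOn ℝ (⊤ : ℕ∞) w V := by
    intro x hx
    apply ContDiffAt.contDiffWithinAt
    obtain ⟨r, hr, hball⟩ := Metric.isOpen_iff.mp hV x hx
    apply (P.avg_smooth hw (show 0 < (r / 2)⁻¹ by positivity)).contDiffAt.congr_of_eventuallyEq
    filter_upwards [ball_mem_nhds x (show 0 < r / 2 by positivity)] with y hy
    symm
    apply P.mean_value hN hw hV hcont hd (by positivity)
    rw [inv_inv]
    refine Subset.trans ?_ hball
    intro z hz
    rw [mem_ball] at hy ⊢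
    rw [mem_closedBall] at hz
    linarith [dist_triangle z y x]
  refine ⟨hs, ?_⟩
  have hs2 : ContDiffOn ℝ 2 w V := hs.of_le (by norm_cast)
  have hlc := lap_continuousOn hV hs2
  have hae := hV.ae_eq_zero_of_integral_contDiff_smul_eq_zero (μ := (volume : Measure (EE N)))
    (hlc.locallyIntegrableOn hV.measurableSet) (fun φ h1 h2 h3 => by
      have := lap_ibp hV hs2 h1 h2 h3
      rw [hd φ h1 h2 h3] at this
      simp only [smul_eq_mul, mul_comm (φ _)]
      exact this.symm)
  have := Measure.eqOn_open_of_ae_eq (μ := (volume : Measure (EE N))) (f := lap w) (g := fun _ => 0)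
    (U := V) ((ae_restrict_iff' hV.measurableSet).mpr hae) hV hlc continuousOn_const
  exact this

lemma dharm_of_harm {w : EE N → ℝ} {V : Set (EE N)}
    (hV : IsOpen V) (hw : ContDiffOn ℝ 2 w V) (hl : ∀ x ∈ V, lap w x = 0) : DHarm w V := by
  intro φ h1 h2 h3
  rw [lap_ibp hV hw h1 h2 h3]
  apply integral_eq_zero_of_ae
  refine Eventually.of_forall fun x => ?_
  by_cases hx : x ∈ V
  · simp [hl x hx]
  · simp [image_eq_zero_of_notMem_tsupport (fun h => hx (h3 h))]

end Profile

namespace Profile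
open Filter Topology
variable {N : ℕ} (P : Profile N)

lemma avg_ge {w : EE N → ℝ} (hw : Integrable w) (hnn : ∀ y, 0 ≤ w y) {x : EE N} {c : ℝ}
    (hc : 0 < c) {S : Set (EE N)} (hS : MeasurableSet S) (hsub : S ⊆ closedBall x (2 / 3 / c)) :
    c ^ N * P.m * ∫ y in S, w y ≤ P.avg w x c := by
  have hI := P.avg_integrable hw x hc
  have h1 : ∫ y in S, w y * P.ker c (x - y) ≤ P.avg w x c :=
    setIntegral_le_integral hI (Eventually.of_forall fun y => mul_nonneg (hnn y) (P.ker_nonneg hc _))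
  refine le_trans ?_ h1
  rw [← integral_const_mul]
  apply setIntegral_mono_on (hw.integrableOn.const_mul _) hI.integrableOn hS
  intro y hy
  rw [mul_comm]
  apply mul_le_mul_of_nonneg_left _ (hnn y)
  unfold ker
  apply mul_le_mul_of_nonneg_left _ (by positivity)
  apply P.m_le _ (by positivity)
  have := hsub hy
  rw [mem_closedBall, dist_comm, dist_eq_norm, le_div_iff₀ hc] at this
  have h0 : 0 ≤ ‖x - y‖ * c := by positivity
  nlinarith

lemma ker_lip : ∃ L : ℝ, 0 ≤ L ∧ ∀ c : ℝ, 0 < c → ∀ z z' : EE N,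
    |P.ker c z - P.ker c z'| ≤ c ^ N * (L * (c * ‖z - z'‖)) := by
  have hs : ContDiff ℝ 1 (fun z : EE N => P.g (‖z‖ ^ 2)) :=
    (P.g_smooth.of_le (by norm_cast)).comp (contDiff_id.norm_sq ℝ)
  obtain ⟨L, hL⟩ := hs.lipschitzWith_of_hasCompactSupport (radial_compact P.g_zero) (by norm_num)
  refine ⟨L, L.2, fun c hc z z' => ?_⟩
  have := hL.dist_le_mul (c • z) (c • z')
  rw [Real.dist_eq, dist_eq_norm, ← smul_sub] at this
  simp only [norm_smul, Real.norm_eq_abs, mul_pow, sq_abs] at this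
  unfold ker
  rw [← mul_sub, abs_mul, abs_of_pos (show 0 < c ^ N by positivity)]
  rw [abs_of_pos hc] at this
  exact mul_le_mul_of_nonneg_left this (by positivity)

lemma grad_est (hN : 1 ≤ N) : ∃ C : ℝ, 0 ≤ C ∧ ∀ (w : EE N → ℝ) (V : Set (EE N)) (x : EE N) (d : ℝ),
    Integrable w → (∀ y, 0 ≤ w y) → IsOpen V → ContinuousOn w V → DHarm w V → 0 < d →
    ball x d ⊆ V → ‖fderiv ℝ w x‖ ≤ C / d * w x := by
  obtain ⟨P⟩ := exists_profile N
  obtain ⟨L, hL0, hL⟩ := P.ker_lip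
  have hm := P.m_pos
  refine ⟨3 ^ N * 4 * L / P.m, by positivity, ?_⟩
  intro w V x d hw hnn hV hcont hdh hd hball
  have hwx := hnn x
  set S := closedBall x (d / 2) with hS
  have hSw : 0 ≤ ∫ y in S, w y := integral_nonneg fun y => hnn y
  have hlow : (4 / (3 * d)) ^ N * P.m * ∫ y in S, w y ≤ w x := by
    have hc1 : 0 < 4 / (3 * d) := by positivity
    rw [← P.mean_value hN hw hV hcont hdh hc1 (x := x)]
    · apply P.avg_ge hw hnn hc1 isClosed_closedBall.measurableSet
      apply closedBall_subset_closedBall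
      apply le_of_eq
      field_simp
      norm_num
    · refine (closedBall_subset_ball ?_).trans hball
      rw [inv_div]
      linarith
  apply norm_fderiv_le_of_lip' ℝ (by positivity)
  filter_upwards [ball_mem_nhds x (show 0 < d / 4 by positivity)] with x' hx'
  rw [mem_ball] at hx'
  have hc : 0 < 4 / d := by positivity
  have e1 : w x' = P.avg w x' (4 / d) := by
    symm
    apply P.mean_value hN hw hV hcont hdh hc
    refine Subset.trans ?_ hball
    rw [inv_div]
    intro z hz
    rw [mem_closedBall] at hz
    rw [mem_ball]
    linarith [dist_triangle z x' x]
  have e2 : w x = P.avg w x (4 / d) := by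
    symm
    apply P.mean_value hN hw hV hcont hdh hc
    refine (closedBall_subset_ball ?_).trans hball
    rw [inv_div]
    linarith
  set k := (4 / d) ^ N * (L * (4 / d * ‖x' - x‖)) with hk
  have hk0 : 0 ≤ k := by positivity
  have main : ‖w x' - w x‖ ≤ k * ∫ y in S, w y := by
    rw [e1, e2]
    unfold avg
    rw [← integral_sub (P.avg_integrable hw x' hc) (P.avg_integrable hw x hc)]
    rw [← integral_const_mul, ← integral_indicator isClosed_closedBall.measurableSet]
    apply norm_integral_le_of_norm_le
    · exact (hw.const_mul k).indicator isClosed_closedBall.measurableSet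
    · refine Eventually.of_forall fun y => ?_
      by_cases hy : y ∈ S
      · rw [indicator_of_mem hy, ← mul_sub, norm_mul, Real.norm_eq_abs, Real.norm_eq_abs,
          abs_of_nonneg (hnn y), mul_comm]
        apply mul_le_mul_of_nonneg_right _ (hnn y)
        have := hL _ hc (x' - y) (x - y)
        rwa [sub_sub_sub_cancel_right] at this
      · rw [indicator_of_notMem hy]
        rw [hS, mem_closedBall, not_le] at hy
        rw [P.ker_zero hc, P.ker_zero hc]
        · simp
        · rw [inv_div, ← dist_eq_norm, dist_comm]
          linarith
        · rw [inv_div, ← dist_eq_norm, dist_comm]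
          linarith [dist_triangle y x' x]
  refine main.trans ?_
  have e3 : k = (3 ^ N * 4 * L / P.m / d * ‖x' - x‖) * ((4 / (3 * d)) ^ N * P.m) := by
    rw [hk]
    have : (4 / d) ^ N = 3 ^ N * (4 / (3 * d)) ^ N := by
      rw [← mul_pow]
      congr 1
      field_simp
    rw [this]
    field_simp
  rw [e3, mul_assoc]
  calc _ ≤ (3 ^ N * 4 * L / P.m / d * ‖x' - x‖) * w x :=
        mul_le_mul_of_nonneg_left hlow (by positivity)
    _ = _ := by ring

lemma growth (hN : 1 ≤ N) : ∃ C : ℝ, 0 ≤ C ∧ ∀ (w : EE N → ℝ) (V : Set (EE N)) (x x₀ : EE N) (d : ℝ),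
    Integrable w → (∀ y, 0 ≤ w y) → IsOpen V → ContinuousOn w V → DHarm w V → 0 < d →
    ball x d ⊆ V → dist x x₀ ≤ d → w x ≤ C * P.avg w x₀ (3 * d)⁻¹ := by
  obtain ⟨B, hB0, hB⟩ := P.g_bdd
  have hm := P.m_pos
  refine ⟨6 ^ N * B / P.m, by positivity, ?_⟩
  intro w V x x₀ d hw hnn hV hcont hdh hd hball hx₀
  set S := closedBall x d with hS
  have hc : 0 < 2 / d := by positivity
  have e2 : w x = P.avg w x (2 / d) := by
    symm
    apply P.mean_value hN hw hV hcont hdh hc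
    refine (closedBall_subset_ball ?_).trans hball
    rw [inv_div]
    linarith
  have hlow : ((3 * d)⁻¹) ^ N * P.m * ∫ y in S, w y ≤ P.avg w x₀ (3 * d)⁻¹ := by
    apply P.avg_ge hw hnn (by positivity) isClosed_closedBall.measurableSet
    intro z hz
    rw [mem_closedBall] at hz ⊢
    rw [div_inv_eq_mul]
    linarith [dist_triangle z x x₀]
  have hup : P.avg w x (2 / d) ≤ (2 / d) ^ N * B * ∫ y in S, w y := by
    unfold avg
    rw [← integral_const_mul, ← integral_indicator isClosed_closedBall.measurableSet]
    apply integral_mono (P.avg_integrable hw x hc)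
      ((hw.const_mul _).indicator isClosed_closedBall.measurableSet)
    intro y
    by_cases hy : y ∈ S
    · show w y * P.ker (2 / d) (x - y) ≤ S.indicator _ y
      rw [indicator_of_mem hy, mul_comm]
      apply mul_le_mul_of_nonneg_right _ (hnn y)
      exact mul_le_mul_of_nonneg_left (hB _ (by positivity)).1 (by positivity)
    · show w y * P.ker (2 / d) (x - y) ≤ S.indicator _ y
      rw [indicator_of_notMem hy]
      rw [hS, mem_closedBall, not_le] at hy
      rw [P.ker_zero hc]
      · simp
      · rw [inv_div, ← dist_eq_norm, dist_comm]
        linarith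
  rw [e2]
  refine hup.trans ?_
  have e3 : (2 / d) ^ N * B = 6 ^ N * B / P.m * (((3 * d)⁻¹) ^ N * P.m) := by
    have : (2 / d) ^ N = 6 ^ N * ((3 * d)⁻¹) ^ N := by
      rw [← mul_pow]
      congr 1
      field_simp
      norm_num
    rw [this]
    field_simp
  rw [e3, mul_assoc]
  exact mul_le_mul_of_nonneg_left hlow (by positivity)

lemma grad_sq (hN : 1 ≤ N) {w : EE N → ℝ} {p : EE N} {R A : ℝ} (hR : 0 < R) (hA : 0 ≤ A)
    (hw : Integrable w) (hnn : ∀ y, 0 ≤ w y) (hcont : ContinuousOn w (ball p R))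
    (hDo : IsOpen {x ∈ ball p R | 0 < w x})
    (hdh : DHarm w {x ∈ ball p R | 0 < w x})
    (hdist : ∀ φ : EE N → ℝ, ContDiff ℝ (⊤ : ℕ∞) φ → HasCompactSupport φ →
      tsupport φ ⊆ ball p R → (∀ x, 0 ≤ φ x) → ∫ y, w y * lap φ y ≤ A * ∫ y, φ y) :
    ∃ K : ℝ, 0 ≤ K ∧ ∀ x ∈ ball p (R / 8), 0 < w x → ‖fderiv ℝ w x‖ ^ 2 ≤ K * w x := by
  obtain ⟨P⟩ := exists_profile N
  obtain ⟨C, hC, hgrad⟩ := grad_est hN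
  obtain ⟨C2, hC2, hgrow⟩ := P.growth hN
  obtain ⟨M, hM⟩ := (isCompact_closedBall p (R / 8)).exists_bound_of_continuousOn
    (hcont.mono (closedBall_subset_ball (by linarith)))
  have hH := P.H_nonneg
  set D := {x ∈ ball p R | 0 < w x} with hD
  have hM0 : 0 ≤ M := (norm_nonneg _).trans (hM p (mem_closedBall_self (by positivity)))
  refine ⟨(C / (R / 8)) ^ 2 * M + C ^ 2 * (C2 * (A * P.H * 9 / 2)), by positivity, ?_⟩
  intro x hx hwx
  have hxb : x ∈ ball p R := ball_subset_ball (by linarith) hx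
  have hxD : x ∈ D := ⟨hxb, hwx⟩
  have hne : (Dᶜ).Nonempty := by
    by_contra hcon
    rw [not_nonempty_iff_eq_empty, compl_empty_iff] at hcon
    haveI : Nonempty (Fin N) := ⟨⟨0, hN⟩⟩
    apply NormedSpace.unbounded_univ ℝ (EE N)
    rw [← hcon]
    exact isBounded_ball.subset (fun y hy => hy.1)
  have hcl : IsClosed Dᶜ := hDo.isClosed_compl
  have hdpos : 0 < infDist x Dᶜ := (hcl.notMem_iff_infDist_pos hne).mp (fun h => h hxD)
  obtain ⟨x₀, hx₀, hdx₀⟩ := hcl.exists_infDist_eq_dist hne x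
  set d := infDist x Dᶜ with hd
  have hbD : ball x d ⊆ D := by
    intro y hy
    by_contra hyD
    have := infDist_le_dist_of_mem (x := x) (show y ∈ Dᶜ from hyD)
    rw [mem_ball, dist_comm] at hy
    linarith
  have hcD : ContinuousOn w D := hcont.mono (fun y hy => hy.1)
  have hg := hgrad w D x d hw hnn hDo hcD hdh hdpos hbD
  have hg2 : ‖fderiv ℝ w x‖ ^ 2 ≤ (C / d * w x) ^ 2 := pow_le_pow_left₀ (norm_nonneg _) hg 2
  have hMx : w x ≤ M := (le_abs_self _).trans (hM x (ball_subset_closedBall hx))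
  rcases le_or_gt (R / 8) d with hcase | hcase
  · have h1 : C / d ≤ C / (R / 8) := div_le_div_of_nonneg_left hC (by positivity) hcase
    have h2 : (C / d * w x) ^ 2 ≤ (C / (R / 8)) ^ 2 * M * w x := by
      calc (C / d * w x) ^ 2 ≤ (C / (R / 8) * w x) ^ 2 := by gcongr
        _ = (C / (R / 8)) ^ 2 * w x * w x := by ring
        _ ≤ _ := by gcongr
    have h3 : 0 ≤ C ^ 2 * (C2 * (A * P.H * 9 / 2)) * w x := by positivity
    linarith
  · have hx₀p : dist x₀ p < R / 4 := by
      rw [mem_ball] at hx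
      have := dist_triangle x₀ x p
      rw [dist_comm x₀ x, ← hdx₀] at this
      linarith
    have hx₀b : x₀ ∈ ball p R := by rw [mem_ball]; linarith
    have hw0 : w x₀ = 0 := by
      apply le_antisymm _ (hnn x₀)
      by_contra hcon
      exact hx₀ ⟨hx₀b, not_le.mp hcon⟩
    have hc0 : 0 < (3 * d)⁻¹ := by positivity
    have havg := P.avg_le hN hw (x := x₀) (hcont.continuousAt (isOpen_ball.mem_nhds hx₀b)) (A := A)
      hc0 (by
        intro c hc
        have hcp : 0 < c := hc0.trans_le hc
        apply hdist _ (P.psi_smooth x₀ c) (P.psi_compact x₀ hcp) _ (P.psi_nonneg x₀ c)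
        refine (P.psi_tsupport x₀ hcp).trans ?_
        have h5 : c⁻¹ ≤ 3 * d := by
          have := inv_anti₀ hc0 hc
          rwa [inv_inv] at this
        intro z hz
        rw [mem_closedBall] at hz
        rw [mem_ball]
        linarith [dist_triangle z x₀ p])
    have hgr := hgrow w D x x₀ d hw hnn hDo hcD hdh hdpos hbD hdx₀.ge
    have e5 : A * P.H / (2 * (3 * d)⁻¹ ^ 2) = A * P.H * 9 / 2 * d ^ 2 := by
      field_simp
      norm_num
    rw [hw0, zero_add, e5] at havg
    have h6 : w x ≤ C2 * (A * P.H * 9 / 2) * d ^ 2 := by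
      refine hgr.trans ((mul_le_mul_of_nonneg_left havg hC2).trans (le_of_eq (by ring)))
    have h7 : (C / d * w x) ^ 2 ≤ C ^ 2 * (C2 * (A * P.H * 9 / 2)) * w x := by
      calc (C / d * w x) ^ 2 = C ^ 2 / d ^ 2 * w x * w x := by ring
        _ ≤ C ^ 2 / d ^ 2 * (C2 * (A * P.H * 9 / 2) * d ^ 2) * w x := by gcongr
        _ = _ := by field_simp
    have h8 : 0 ≤ (C / (R / 8)) ^ 2 * M * w x := by positivity
    linarith

end Profile

open Filter Topology

noncomputable def bfun (t : ℝ) : ℝ := t * Real.smoothTransition (t - 1)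

lemma bfun_smooth : ContDiff ℝ (⊤ : ℕ∞) bfun :=
  contDiff_id.mul (Real.smoothTransition.contDiff.comp (contDiff_id.sub contDiff_const))

lemma bfun_zero {t : ℝ} (ht : t ≤ 1) : bfun t = 0 := by
  simp [bfun, Real.smoothTransition.zero_of_nonpos (show t - 1 ≤ 0 by linarith)]

lemma bfun_id {t : ℝ} (ht : 2 ≤ t) : bfun t = t := by
  simp [bfun, Real.smoothTransition.one_of_one_le (show 1 ≤ t - 1 by linarith)]

lemma bfun_nonneg {t : ℝ} (ht : 0 ≤ t) : 0 ≤ bfun t :=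
  mul_nonneg ht (Real.smoothTransition.nonneg _)

lemma bfun_le {t : ℝ} (ht : 0 ≤ t) : bfun t ≤ t :=
  mul_le_of_le_one_right ht (Real.smoothTransition.le_one _)

lemma bfun_d1 (t : ℝ) : HasDerivAt bfun (deriv bfun t) t :=
  (bfun_smooth.differentiable (by simp)).differentiableAt.hasDerivAt

lemma bfun_s2 : ContDiff ℝ (⊤ : ℕ∞) (deriv bfun) := (contDiff_infty_iff_deriv.mp bfun_smooth).2

lemma bfun_d2 (t : ℝ) : HasDerivAt (deriv bfun) (deriv (deriv bfun) t) t :=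
  (bfun_s2.differentiable (by simp)).differentiableAt.hasDerivAt

lemma bfun_dd_zero {t : ℝ} (ht : 2 < t) : deriv (deriv bfun) t = 0 := by
  have e : bfun =ᶠ[𝓝 t] id := by
    filter_upwards [lt_mem_nhds ht] with s hs using bfun_id hs.le
  have e2 := e.deriv
  rw [e2.deriv_eq]
  have : deriv (id : ℝ → ℝ) = fun _ => 1 := by ext x; simp
  rw [this]; simp

lemma bfun_dd_bdd : ∃ C, 0 ≤ C ∧ ∀ t, 0 ≤ t → |deriv (deriv bfun) t| * t ≤ C := by
  have c : Continuous (deriv (deriv bfun)) := (contDiff_infty_iff_deriv.mp bfun_s2).2.continuous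
  obtain ⟨C, hC⟩ := (isCompact_Icc (a := (0:ℝ)) (b := 2)).exists_bound_of_continuousOn
    (f := fun t => |deriv (deriv bfun) t| * t) (by fun_prop)
  refine ⟨max C 0, le_max_right _ _, fun t ht => ?_⟩
  rcases le_or_gt t 2 with h | h
  · exact (le_abs_self _).trans ((hC t ⟨ht, h⟩).trans (le_max_left _ _))
  · rw [bfun_dd_zero h]; simp

noncomputable def beps (ε t : ℝ) : ℝ := ε * bfun (t / ε)

lemma beps_d1 {ε : ℝ} (hε : 0 < ε) (t : ℝ) : HasDerivAt (beps ε) (deriv bfun (t / ε)) t := by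
  have := ((bfun_d1 (t / ε)).comp t ((hasDerivAt_id t).div_const ε)).const_mul ε
  refine this.congr_deriv ?_
  field_simp

lemma beps_d2 {ε : ℝ} (t : ℝ) :
    HasDerivAt (fun t => deriv bfun (t / ε)) (deriv (deriv bfun) (t / ε) / ε) t := by
  have := ((bfun_d2 (t / ε)).comp t ((hasDerivAt_id t).div_const ε))
  refine this.congr_deriv ?_
  ring

lemma beps_smooth (ε : ℝ) : ContDiff ℝ (⊤ : ℕ∞) (beps ε) :=
  contDiff_const.mul (bfun_smooth.comp (contDiff_id.div_const ε))

lemma dharm_main {N : ℕ} {w : EE N → ℝ} {V : Set (EE N)} (hV : IsOpen V)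
    (hw : Integrable w) (hnn : ∀ y, 0 ≤ w y) (hcont : ContinuousOn w V)
    (hC2 : ContDiffOn ℝ 2 w {x ∈ V | 0 < w x}) (hlap : ∀ x ∈ {x ∈ V | 0 < w x}, lap w x = 0)
    {K : ℝ} (hK : 0 ≤ K) (hgrad : ∀ x ∈ V, 0 < w x → ‖fderiv ℝ w x‖ ^ 2 ≤ K * w x) :
    DHarm w V := by
  intro φ hφ hc hs
  have hDo : IsOpen {x ∈ V | 0 < w x} := hcont.isOpen_inter_preimage hV isOpen_Ioi
  obtain ⟨C, hC, hCb⟩ := bfun_dd_bdd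
  set e : ℕ → ℝ := fun n => 1 / ((n : ℝ) + 1) with he
  have hepos : ∀ n, 0 < e n := fun n => by positivity
  have hetend : Tendsto e atTop (𝓝 0) := tendsto_one_div_add_atTop_nhds_zero_nat
  have hloc : ∀ n, ∀ x ∈ V, w x = 0 → (fun y => beps (e n) (w y)) =ᶠ[𝓝 x] fun _ => 0 := by
    intro n x hx h0
    have : ∀ᶠ y in 𝓝 x, w y < e n :=
      (hcont.continuousAt (hV.mem_nhds hx)).eventually_lt_const (by rw [h0]; exact hepos n)
    filter_upwards [this] with y hy
    unfold beps
    rw [bfun_zero, mul_zero]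
    rw [div_le_one (hepos n)]
    exact hy.le
  have hfC2 : ∀ n, ContDiffOn ℝ 2 (fun y => beps (e n) (w y)) V := by
    intro n x hx
    apply ContDiffAt.contDiffWithinAt
    rcases (hnn x).eq_or_lt with h0 | h0
    · exact contDiffAt_const.congr_of_eventuallyEq (hloc n x hx h0.symm)
    · have h1 : ContDiffAt ℝ 2 w x := hC2.contDiffAt (hDo.mem_nhds ⟨hx, h0⟩)
      have h2 : ContDiffAt ℝ 2 (beps (e n)) (w x) :=
        ((beps_smooth (e n)).of_le (by norm_cast)).contDiffAt
      exact h2.comp x h1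
  have hφ2 : ContDiff ℝ 2 φ := hφ.of_le (by norm_cast)
  have hlφ : Continuous (lap φ) := by
    have := lap_continuousOn isOpen_univ hφ2.contDiffOn
    exact continuousOn_univ.mp this
  have hlc : HasCompactSupport (lap φ) := hc.of_isClosed_subset (isClosed_tsupport _) (tsupport_lap φ)
  obtain ⟨B, hB⟩ := hlc.exists_bound_of_continuous hlφ
  have t1 : Tendsto (fun n => ∫ x, beps (e n) (w x) * lap φ x) atTop (𝓝 (∫ x, w x * lap φ x)) := by
    apply tendsto_integral_of_dominated_convergence (fun x => w x * B)
    · intro n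
      exact ((beps_smooth (e n)).continuous.comp_aestronglyMeasurable hw.aestronglyMeasurable).mul
        hlφ.aestronglyMeasurable
    · exact hw.mul_const B
    · intro n
      refine Eventually.of_forall fun x => ?_
      have hq : 0 ≤ w x / e n := div_nonneg (hnn x) (hepos n).le
      have h1 : 0 ≤ beps (e n) (w x) := mul_nonneg (hepos n).le (bfun_nonneg hq)
      have h2 : beps (e n) (w x) ≤ w x := by
        unfold beps
        calc _ ≤ e n * (w x / e n) := mul_le_mul_of_nonneg_left (bfun_le hq) (hepos n).le
          _ = w x := by field_simp [(hepos n).ne']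
      rw [norm_mul, Real.norm_eq_abs, abs_of_nonneg h1]
      exact mul_le_mul h2 (hB x) (norm_nonneg _) (hnn x)
    · refine Eventually.of_forall fun x => ?_
      apply Tendsto.mul_const
      rcases (hnn x).eq_or_lt with h0 | h0
      · rw [← h0]
        apply tendsto_const_nhds.congr
        intro n
        simp [beps, bfun]
      · apply tendsto_const_nhds.congr'
        filter_upwards [hetend.eventually_lt_const (show 0 < w x / 2 by positivity)] with n hn
        unfold beps
        rw [bfun_id]
        · field_simp [(hepos n).ne']
        · rw [le_div_iff₀ (hepos n)]; linarith
  have t2 : Tendsto (fun n => ∫ x, lap (fun y => beps (e n) (w y)) x * φ x) atTop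
      (𝓝 (∫ x : EE N, (0 : ℝ))) := by
    apply tendsto_integral_of_dominated_convergence (fun x => C * (N * K) * |φ x|)
    · intro n
      exact (integrable_mul_supp hV (lap_continuousOn hV (hfC2 n)) hφ.continuous
        hc hs).2.2.aestronglyMeasurable
    · exact ((hφ.continuous.integrable_of_hasCompactSupport hc).abs).const_mul _
    · intro n
      refine Eventually.of_forall fun x => ?_
      rw [norm_mul, Real.norm_eq_abs, Real.norm_eq_abs]
      by_cases hx : x ∈ V
      swap
      · simp [image_eq_zero_of_notMem_tsupport (fun h => hx (hs h))]
      apply mul_le_mul_of_nonneg_right _ (abs_nonneg _)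
      rcases (hnn x).eq_or_lt with h0 | h0
      · rw [lap_congr_nhds (hloc n x hx h0.symm)]
        simp [lap]
        positivity
      · rw [lap_comp hDo hC2 (beps_d1 (hepos n)) beps_d2 ⟨hx, h0⟩, hlap x ⟨hx, h0⟩, mul_zero,
          add_zero, abs_mul]
        have hsum : |∑ i : Fin N, (fderiv ℝ w x (ee i)) ^ 2| ≤ N * K * w x := by
          rw [abs_of_nonneg (Finset.sum_nonneg fun i _ => sq_nonneg _)]
          calc _ ≤ ∑ i : Fin N, K * w x := by
                apply Finset.sum_le_sum
                intro i _
                refine le_trans ?_ (hgrad x hx h0)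
                have := (fderiv ℝ w x).le_opNorm (ee i)
                simp only [EuclideanSpace.norm_single, norm_one, mul_one] at this
                rw [← sq_abs]
                exact pow_le_pow_left₀ (abs_nonneg _) this 2
            _ = _ := by simp; ring
        calc _ ≤ |deriv (deriv bfun) (w x / e n) / e n| * (N * K * w x) :=
              mul_le_mul_of_nonneg_left hsum (abs_nonneg _)
          _ = (|deriv (deriv bfun) (w x / e n)| * (w x / e n)) * (N * K) := by
              rw [abs_div, abs_of_pos (hepos n)]; ring
          _ ≤ _ := mul_le_mul_of_nonneg_right (hCb _ (div_nonneg h0.le (hepos n).le))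
              (by positivity)
    · refine Eventually.of_forall fun x => ?_
      by_cases hx : x ∈ V
      swap
      · simp [image_eq_zero_of_notMem_tsupport (fun h => hx (hs h))]
      rcases (hnn x).eq_or_lt with h0 | h0
      · apply tendsto_const_nhds.congr
        intro n
        rw [lap_congr_nhds (hloc n x hx h0.symm)]
        simp [lap]
      · apply tendsto_const_nhds.congr'
        filter_upwards [hetend.eventually_lt_const (show 0 < w x / 2 by positivity)] with n hn
        rw [lap_comp hDo hC2 (beps_d1 (hepos n)) beps_d2 ⟨hx, h0⟩, hlap x ⟨hx, h0⟩, bfun_dd_zero]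
        · simp
        · rw [lt_div_iff₀ (hepos n)]; linarith
  have t3 : Tendsto (fun n => ∫ x, beps (e n) (w x) * lap φ x) atTop (𝓝 (∫ x : EE N, (0 : ℝ))) := by
    refine t2.congr fun n => ?_
    rw [lap_ibp hV (hfC2 n) hφ hc hs]
  have := tendsto_nhds_unique t1 t3
  simpa using this

lemma local_main {N : ℕ} (hN : 1 ≤ N) {w : EE N → ℝ} {p : EE N} {R A : ℝ} (hR : 0 < R) (hA : 0 ≤ A)
    (hw : Integrable w) (hnn : ∀ y, 0 ≤ w y) (hcont : ContinuousOn w (ball p R))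
    (hC2 : ContDiffOn ℝ 2 w {x ∈ ball p R | 0 < w x})
    (hlap : ∀ x ∈ {x ∈ ball p R | 0 < w x}, lap w x = 0)
    (hdist : ∀ φ : EE N → ℝ, ContDiff ℝ (⊤ : ℕ∞) φ → HasCompactSupport φ →
      tsupport φ ⊆ ball p R → (∀ x, 0 ≤ φ x) → ∫ y, w y * lap φ y ≤ A * ∫ y, φ y) :
    ContDiffOn ℝ (⊤ : ℕ∞) w (ball p (R / 8)) ∧ ∀ x ∈ ball p (R / 8), lap w x = 0 := by
  have hDo : IsOpen {x ∈ ball p R | 0 < w x} := hcont.isOpen_inter_preimage isOpen_ball isOpen_Ioi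
  have hdh := Profile.dharm_of_harm hDo hC2 hlap
  obtain ⟨K, hK, hgrad⟩ := Profile.grad_sq hN hR hA hw hnn hcont hDo hdh hdist
  have hsub : ball p (R / 8) ⊆ ball p R := ball_subset_ball (by linarith)
  have hc' := hcont.mono hsub
  apply Profile.weyl hN hw isOpen_ball hc'
  have hsubD : {x ∈ ball p (R / 8) | 0 < w x} ⊆ {x ∈ ball p R | 0 < w x} :=
    fun x hx => ⟨hsub hx.1, hx.2⟩
  exact dharm_main isOpen_ball hw hnn hc' (hC2.mono hsubD) (fun x hx => hlap x (hsubD hx)) hK hgrad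

lemma lap_one_sub {N : ℕ} (u : EE N → ℝ) (x : EE N) : lap (fun y => 1 - u y) x = - lap u x := by
  unfold lap
  rw [← Finset.sum_neg_distrib]
  apply Finset.sum_congr rfl
  intro i _
  simp [fderiv_const_sub, fderiv_fun_neg]

theorem stmt_14 {N : ℕ} (hN : 2 ≤ N) (Ω : Set (EuclideanSpace ℝ (Fin N)))
    (hΩo : IsOpen Ω) (A₀ : ℝ) (hA₀ : 0 ≤ A₀)
    (u : EuclideanSpace ℝ (Fin N) → ℝ)
    (hloclip : ∀ x ∈ Ω, ∃ s ∈ nhds x, ∃ L : NNReal, LipschitzOnWith L u s)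
    (hharm : ContDiffOn ℝ 2 u {x ∈ Ω | u x < 1}
      ∧ ∀ x ∈ {x ∈ Ω | u x < 1}, lap u x = 0)
    (hdistrib : ∀ φ : EuclideanSpace ℝ (Fin N) → ℝ, ContDiff ℝ (⊤ : ℕ∞) φ →
      HasCompactSupport φ → tsupport φ ⊆ Ω → (∀ x, 0 ≤ φ x) →
      -(∫ x in Ω, u x * lap φ x) ≤ A₀ * ∫ x in Ω, φ x) :
    ContDiffOn ℝ (⊤ : ℕ∞) u (interior {x ∈ Ω | u x ≤ 1})
      ∧ ∀ x ∈ interior {x ∈ Ω | u x ≤ 1}, lap u x = 0 := by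
  have hucont : ContinuousOn u Ω := by
    intro x hx
    obtain ⟨s, hs, L, hL⟩ := hloclip x hx
    exact (hL.continuousOn.continuousAt hs).continuousWithinAt
  suffices H : ∀ p ∈ interior {x ∈ Ω | u x ≤ 1}, ContDiffAt ℝ (⊤ : ℕ∞) u p ∧ lap u p = 0 from
    ⟨fun p hp => (H p hp).1.contDiffWithinAt, fun p hp => (H p hp).2⟩
  intro p hp
  obtain ⟨R, hR, hball⟩ := Metric.nhds_basis_closedBall.mem_iff.mp (isOpen_interior.mem_nhds hp)
  have hsub : closedBall p R ⊆ {x ∈ Ω | u x ≤ 1} := hball.trans interior_subset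
  have hbs : ball p R ⊆ closedBall p R := ball_subset_closedBall
  set w : EE N → ℝ := (ball p R).indicator (fun x => 1 - u x) with hw
  have hwin : ∀ x ∈ ball p R, w x = 1 - u x := fun x hx => indicator_of_mem hx _
  have hweq : ∀ x ∈ ball p R, w =ᶠ[𝓝 x] fun x => 1 - u x := by
    intro x hx
    filter_upwards [isOpen_ball.mem_nhds hx] with y hy using hwin y hy
  have hvc : ContinuousOn (fun x => 1 - u x) (closedBall p R) :=
    continuousOn_const.sub (hucont.mono (fun x hx => (hsub hx).1))
  have hwint : Integrable w := by
    rw [hw, integrable_indicator_iff isOpen_ball.measurableSet]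
    exact (hvc.integrableOn_compact (isCompact_closedBall p R)).mono_set hbs
  have hnn : ∀ y, 0 ≤ w y := by
    intro y
    apply indicator_nonneg
    intro x hx
    linarith [(hsub (hbs hx)).2]
  have hcont : ContinuousOn w (ball p R) := (hvc.mono hbs).congr hwin
  have hDsub : {x ∈ ball p R | 0 < w x} ⊆ {x ∈ Ω | u x < 1} := by
    rintro x ⟨hx, hx2⟩
    rw [hwin x hx] at hx2
    exact ⟨(hsub (hbs hx)).1, by linarith⟩
  have hC2 : ContDiffOn ℝ 2 w {x ∈ ball p R | 0 < w x} := by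
    refine (contDiffOn_const.sub (hharm.1.mono hDsub)).congr (f := fun x => 1 - u x) ?_
    exact fun x hx => hwin x hx.1
  have hlap : ∀ x ∈ {x ∈ ball p R | 0 < w x}, lap w x = 0 := by
    intro x hx
    rw [lap_congr_nhds (hweq x hx.1), lap_one_sub, hharm.2 x (hDsub hx), neg_zero]
  have hdist : ∀ φ : EE N → ℝ, ContDiff ℝ (⊤ : ℕ∞) φ → HasCompactSupport φ →
      tsupport φ ⊆ ball p R → (∀ x, 0 ≤ φ x) → ∫ y, w y * lap φ y ≤ A₀ * ∫ y, φ y := by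
    intro φ h1 h2 h3 h4
    have h5 : tsupport φ ⊆ Ω := fun x hx => (hsub (hbs (h3 hx))).1
    have h6 := hdistrib φ h1 h2 h5 h4
    have hφ2 : ContDiff ℝ 2 φ := h1.of_le (by norm_cast)
    have hlφ : Continuous (lap φ) :=
      continuousOn_univ.mp (lap_continuousOn isOpen_univ hφ2.contDiffOn)
    have hls := tsupport_lap φ
    have hlc : HasCompactSupport (lap φ) := h2.of_isClosed_subset (isClosed_tsupport _) hls
    have e1 : ∫ x in Ω, φ x = ∫ x, φ x := by
      apply setIntegral_eq_integral_of_forall_compl_eq_zero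
      intro x hx
      exact image_eq_zero_of_notMem_tsupport (fun h => hx (h5 h))
    have e2 : ∫ x in Ω, u x * lap φ x = ∫ x, u x * lap φ x := by
      apply setIntegral_eq_integral_of_forall_compl_eq_zero
      intro x hx
      rw [image_eq_zero_of_notMem_tsupport (fun h => hx (h5 (hls h))), mul_zero]
    have e3 : ∫ x, lap φ x = 0 := by
      have := lap_ibp isOpen_univ (f := fun _ => (1 : ℝ)) contDiffOn_const h1 h2 (subset_univ _)
      simpa [lap] using this
    have e4 : ∫ y, w y * lap φ y = ∫ y, (lap φ y - u y * lap φ y) := by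
      congr 1
      ext y
      by_cases hy : y ∈ ball p R
      · rw [hwin y hy]; ring
      · rw [image_eq_zero_of_notMem_tsupport (fun h => hy (h3 (hls h)))]; ring
    rw [e4, integral_sub (hlφ.integrable_of_hasCompactSupport hlc)
      (integrable_mul_supp hΩo hucont hlφ hlc (hls.trans h5)).2.2, e3]
    rw [e1, e2] at h6
    linarith
  obtain ⟨r1, r2⟩ := local_main (by omega) hR hA₀ hwint hnn hcont hC2 hlap hdist
  have hpb : p ∈ ball p (R / 8) := mem_ball_self (by positivity)
  have hpR : p ∈ ball p R := mem_ball_self hR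
  constructor
  · have h1 : ContDiffAt ℝ (⊤ : ℕ∞) w p := r1.contDiffAt (isOpen_ball.mem_nhds hpb)
    have h2 : ContDiffAt ℝ (⊤ : ℕ∞) (fun x => 1 - w x) p := contDiffAt_const.sub h1
    apply h2.congr_of_eventuallyEq
    filter_upwards [isOpen_ball.mem_nhds hpR] with y hy
    rw [hwin y hy]; ring
  · have := r2 p hpb
    rw [lap_congr_nhds (hweq p hpR), lap_one_sub] at this
    linarith
end

section
/- Let N ≥ 2, let Ω ⊂ ℝ^N be an open set, and let p > 2. Let β : ℝ → ℝ be a continuous function with β(s) = 0 for s ∉ (0,1). Let ε_j ∈ (0,1] be a sequence with ε_j → 0, and let u_j be twice continuously differentiable functions on Ω satisfying Δu_j(x) = (1/ε_j)β((u_j(x)−1)/ε_j) − (u_j(x)−1)_+^{p−1} for all x ∈ Ω. Suppose u_j converges to a function u : Ω → ℝ uniformly on compact subsets of Ω. Then u is twice continuously differentiable on the open set {x ∈ Ω : u(x) > 1} with −Δu = (u−1)^{p−1} there, and u is harmonic (twice continuously differentiable with Δu = 0) on the open set {x ∈ Ω : u(x) < 1}. -/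
open MeasureTheory Metric Set Filter

open scoped Topology

/-- Second derivative test (necessary condition) in one variable. -/
lemma aux_deriv2_nonpos {g : ℝ → ℝ} (hc : ContinuousAt g 0) (hmax : IsLocalMax g 0) :
    deriv (deriv g) 0 ≤ 0 := by
  by_contra hpos
  push Not at hpos
  have hmin := isLocalMin_of_deriv_deriv_pos hpos hmax.deriv_eq_zero hc
  have heq : g =ᶠ[𝓝 0] fun _ => g 0 := by
    filter_upwards [hmax, hmin] with t h1 h2 using le_antisymm h1 h2
  have h2 : deriv (deriv g) 0 = 0 := by
    rw [heq.deriv.deriv_eq]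
    simp
  linarith

lemma aux_diff1 {N : ℕ} {w : EuclideanSpace ℝ (Fin N) → ℝ} {x : EuclideanSpace ℝ (Fin N)}
    (hw : ContDiffAt ℝ 2 w x) : DifferentiableAt ℝ (fderiv ℝ w) x :=
  (hw.fderiv_right (m := 1) (by norm_num)).differentiableAt (by norm_num)

lemma aux_diff2 {N : ℕ} {w : EuclideanSpace ℝ (Fin N) → ℝ} {x : EuclideanSpace ℝ (Fin N)}
    (hw : ContDiffAt ℝ 2 w x) (e : EuclideanSpace ℝ (Fin N)) :
    DifferentiableAt ℝ (fun y => fderiv ℝ w y e) x :=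
  (aux_diff1 hw).clm_apply (differentiableAt_const e)

lemma aux_evdiff {N : ℕ} {w : EuclideanSpace ℝ (Fin N) → ℝ} {x : EuclideanSpace ℝ (Fin N)}
    (hw : ContDiffAt ℝ 2 w x) : ∀ᶠ y in 𝓝 x, DifferentiableAt ℝ w y := by
  filter_upwards [hw.eventually (by simp)] with y hy
  exact hy.differentiableAt (by norm_num)

lemma lap_eq {N : ℕ} {w : EuclideanSpace ℝ (Fin N) → ℝ} {x : EuclideanSpace ℝ (Fin N)}
    (hw : ContDiffAt ℝ 2 w x) :
    lap w x = ∑ i : Fin N, fderiv ℝ (fderiv ℝ w) x (EuclideanSpace.single i 1)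
      (EuclideanSpace.single i 1) := by
  unfold lap
  refine Finset.sum_congr rfl fun i _ => ?_
  rw [fderiv_clm_apply (aux_diff1 hw) (differentiableAt_const _)]
  simp

lemma aux_lap_nonpos {N : ℕ} {w : EuclideanSpace ℝ (Fin N) → ℝ} {x : EuclideanSpace ℝ (Fin N)}
    (hw : ContDiffAt ℝ 2 w x) (hmax : IsLocalMax w x) : lap w x ≤ 0 := by
  unfold lap
  refine Finset.sum_nonpos fun i _ => ?_
  set e : EuclideanSpace ℝ (Fin N) := EuclideanSpace.single i 1
  have hline : ∀ t : ℝ, HasDerivAt (fun t : ℝ => x + t • e) e t := fun t => by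
    simpa using ((hasDerivAt_id t).smul_const e).const_add x
  have hcont : Tendsto (fun t : ℝ => x + t • e) (𝓝 0) (𝓝 x) := by
    have := (hline 0).continuousAt.tendsto
    simpa using this
  have h1 : deriv (fun t : ℝ => w (x + t • e)) =ᶠ[𝓝 0] fun t => fderiv ℝ w (x + t • e) e := by
    filter_upwards [hcont.eventually (aux_evdiff hw)] with t ht
    exact (ht.hasFDerivAt.comp_hasDerivAt t (hline t)).deriv
  have h2 : deriv (fun t : ℝ => fderiv ℝ w (x + t • e) e) 0 =
      fderiv ℝ (fun y => fderiv ℝ w y e) x e := by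
    have h3 : HasFDerivAt (fun y => fderiv ℝ w y e) (fderiv ℝ (fun y => fderiv ℝ w y e) x)
        (x + (0:ℝ) • e) := by
      simpa using (aux_diff2 hw e).hasFDerivAt
    exact (h3.comp_hasDerivAt (0:ℝ) (hline 0)).deriv
  rw [← h2, ← h1.deriv_eq]
  apply aux_deriv2_nonpos
  · have : ContinuousAt w (x + (0:ℝ) • e) := by simpa using hw.continuousAt
    exact ContinuousAt.comp (f := fun t : ℝ => x + t • e) this (hline 0).continuousAt
  · have := hcont.eventually hmax
    filter_upwards [this] with t ht
    simpa using ht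

lemma lap_sub {N : ℕ} {v w : EuclideanSpace ℝ (Fin N) → ℝ} {x : EuclideanSpace ℝ (Fin N)}
    (hv : ContDiffAt ℝ 2 v x) (hw : ContDiffAt ℝ 2 w x) :
    lap (fun y => v y - w y) x = lap v x - lap w x := by
  unfold lap
  rw [← Finset.sum_sub_distrib]
  refine Finset.sum_congr rfl fun i _ => ?_
  have h : (fun y => fderiv ℝ (fun y => v y - w y) y (EuclideanSpace.single i 1)) =ᶠ[𝓝 x]
      fun y => fderiv ℝ v y (EuclideanSpace.single i 1) - fderiv ℝ w y (EuclideanSpace.single i 1) := by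
    filter_upwards [aux_evdiff hv, aux_evdiff hw] with y h1 h2
    rw [fderiv_fun_sub h1 h2]; rfl
  rw [h.fderiv_eq, fderiv_fun_sub (aux_diff2 hv _) (aux_diff2 hw _)]; rfl

lemma lap_const_mul {N : ℕ} {v : EuclideanSpace ℝ (Fin N) → ℝ} {x : EuclideanSpace ℝ (Fin N)}
    (hv : ContDiffAt ℝ 2 v x) (c : ℝ) :
    lap (fun y => c * v y) x = c * lap v x := by
  unfold lap
  rw [Finset.mul_sum]
  refine Finset.sum_congr rfl fun i _ => ?_
  have h : (fun y => fderiv ℝ (fun y => c * v y) y (EuclideanSpace.single i 1)) =ᶠ[𝓝 x]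
      fun y => c * fderiv ℝ v y (EuclideanSpace.single i 1) := by
    filter_upwards [aux_evdiff hv] with y h1
    rw [fderiv_const_mul h1]; rfl
  rw [h.fderiv_eq, fderiv_const_mul (aux_diff2 hv _)]; rfl

lemma lap_translate {N : ℕ} (v : EuclideanSpace ℝ (Fin N) → ℝ) (h x : EuclideanSpace ℝ (Fin N)) :
    lap (fun y => v (y + h)) x = lap v (x + h) := by
  unfold lap
  refine Finset.sum_congr rfl fun i _ => ?_
  have : (fun y => fderiv ℝ (fun y => v (y + h)) y (EuclideanSpace.single i 1)) =
      fun y => fderiv ℝ v (y + h) (EuclideanSpace.single i 1) := by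
    funext y
    rw [fderiv_comp_add_right]
  rw [this, fderiv_comp_add_right (f := fun y => fderiv ℝ v y (EuclideanSpace.single i 1))]

/-- Reflection in the `i`-th coordinate. -/
noncomputable def refl_i {N : ℕ} (i : Fin N) :
    EuclideanSpace ℝ (Fin N) ≃ₗᵢ[ℝ] EuclideanSpace ℝ (Fin N) :=
  LinearIsometryEquiv.piLpCongrRight 2
    (fun k => if k = i then LinearIsometryEquiv.neg ℝ else LinearIsometryEquiv.refl ℝ ℝ)

lemma refl_i_apply {N : ℕ} (i k : Fin N) (x : EuclideanSpace ℝ (Fin N)) :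
    refl_i i x k = if k = i then - x k else x k := by
  unfold refl_i
  simp only [LinearIsometryEquiv.piLpCongrRight_apply]
  split_ifs with h <;> simp [h]

lemma refl_i_single {N : ℕ} (i k : Fin N) (c : ℝ) :
    refl_i i (EuclideanSpace.single k c) =
      (if k = i then (-1:ℝ) else 1) • EuclideanSpace.single k c := by
  ext l
  rw [refl_i_apply]
  by_cases h : l = k
  · subst h; split_ifs <;> simp
  · split_ifs <;> simp [h]

lemma lap_refl {N : ℕ} (v : EuclideanSpace ℝ (Fin N) → ℝ) (i : Fin N)
    (x : EuclideanSpace ℝ (Fin N)) :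
    lap (fun y => v (refl_i i y)) x = lap v (refl_i i x) := by
  unfold lap
  refine Finset.sum_congr rfl fun k _ => ?_
  set R : EuclideanSpace ℝ (Fin N) ≃L[ℝ] EuclideanSpace ℝ (Fin N) :=
    (refl_i i).toContinuousLinearEquiv with hR
  have hcomp : ∀ (f : EuclideanSpace ℝ (Fin N) → ℝ) (y : EuclideanSpace ℝ (Fin N)),
      fderiv ℝ (fun y => f (refl_i i y)) y (EuclideanSpace.single k 1) =
      (if k = i then (-1:ℝ) else 1) * fderiv ℝ f (refl_i i y) (EuclideanSpace.single k 1) := by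
    intro f y
    have := R.comp_right_fderiv (f := f) (x := y)
    have h2 : fderiv ℝ (fun y => f (refl_i i y)) y = _ := this
    rw [h2]
    have h3 : R (EuclideanSpace.single k 1) = _ := refl_i_single i k 1
    simp only [ContinuousLinearMap.comp_apply, ContinuousLinearEquiv.coe_coe]
    rw [h3, map_smul]; rfl
  simp_rw [hcomp v]
  rw [hcomp (fun z => (if k = i then (-1:ℝ) else 1) * fderiv ℝ v z (EuclideanSpace.single k 1)) x]
  split_ifs <;> simp

lemma aux_psi_contDiff {N : ℕ} (A B C : ℝ) (i : Fin N) :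
    ContDiff ℝ 2 (fun y : EuclideanSpace ℝ (Fin N) =>
      A * ∑ k, (y k) ^ 2 + B * y i - C * (y i) ^ 2) := by
  fun_prop

lemma aux_psi_lap {N : ℕ} (A B C : ℝ) (i : Fin N) (x : EuclideanSpace ℝ (Fin N)) :
    lap (fun y : EuclideanSpace ℝ (Fin N) =>
      A * ∑ k, (y k) ^ 2 + B * y i - C * (y i) ^ 2) x = 2 * N * A - 2 * C := by
  have hp : ∀ (k : Fin N) (y : EuclideanSpace ℝ (Fin N)),
      HasFDerivAt (fun y : EuclideanSpace ℝ (Fin N) => y k)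
        (EuclideanSpace.proj k : EuclideanSpace ℝ (Fin N) →L[ℝ] ℝ) y := fun k y =>
    (EuclideanSpace.proj k : EuclideanSpace ℝ (Fin N) →L[ℝ] ℝ).hasFDerivAt
  have h1 : ∀ (l : Fin N) (y : EuclideanSpace ℝ (Fin N)),
      fderiv ℝ (fun y : EuclideanSpace ℝ (Fin N) =>
        A * ∑ k, (y k) ^ 2 + B * y i - C * (y i) ^ 2) y (EuclideanSpace.single l 1) =
      2 * A * y l + (B - 2 * C * y i) * (if i = l then 1 else 0) := by
    intro l y
    have := (((HasFDerivAt.fun_sum (u := Finset.univ) fun k _ => (hp k y).pow 2).const_mul A).fun_add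
      ((hp i y).const_mul B)).fun_sub (((hp i y).pow 2).const_mul C)
    rw [this.fderiv]
    simp
    split_ifs <;> ring
  unfold lap
  simp_rw [h1]
  have h2 : ∀ l : Fin N, fderiv ℝ (fun y : EuclideanSpace ℝ (Fin N) =>
      2 * A * y l + (B - 2 * C * y i) * (if i = l then 1 else 0)) x (EuclideanSpace.single l 1) =
      2 * A - 2 * C * (if i = l then 1 else 0) := by
    intro l
    have := ((hp l x).const_mul (2*A)).fun_add
      ((((hp i x).const_mul (2*C)).const_sub B).mul_const (if i = l then (1:ℝ) else 0))
    rw [this.fderiv]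
    by_cases h : i = l <;> simp [h, sub_eq_add_neg]
  simp_rw [h2]
  simp [Finset.sum_sub_distrib]
  ring

lemma aux_halfball {N : ℕ} {w : EuclideanSpace ℝ (Fin N) → ℝ} {r M F : ℝ} (hr : 0 < r)
    (hF : 0 < F) (hw : ∀ y ∈ closedBall (0 : EuclideanSpace ℝ (Fin N)) r, ContDiffAt ℝ 2 w y)
    (hM : ∀ y ∈ closedBall (0 : EuclideanSpace ℝ (Fin N)) r, |w y| ≤ M)
    (hL : ∀ y ∈ closedBall (0 : EuclideanSpace ℝ (Fin N)) r, |lap w y| ≤ F) (i : Fin N)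
    (x : EuclideanSpace ℝ (Fin N)) (hx : x ∈ closedBall (0 : EuclideanSpace ℝ (Fin N)) r)
    (hxi : 0 ≤ x i) :
    (w x - w (refl_i i x)) / 2 ≤ (M / r ^ 2) * ∑ k, (x k) ^ 2 +
      ((N * (M / r ^ 2) + F) * r) * x i - (N * (M / r ^ 2) + F) * (x i) ^ 2 := by
  have hM0 : 0 ≤ M := (abs_nonneg _).trans (hM 0 (by simp [hr.le]))
  set A := M / r ^ 2 with hA
  have hA0 : 0 ≤ A := by positivity
  set C := N * A + F with hC
  have hC0 : 0 < C := by positivity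
  have hRmem : ∀ y ∈ closedBall (0 : EuclideanSpace ℝ (Fin N)) r, refl_i i y ∈ closedBall 0 r := by
    intro y hy
    simpa using hy
  set θ : EuclideanSpace ℝ (Fin N) → ℝ := fun y => ((1/2) * w y - (1/2) * w (refl_i i y)) -
    (A * ∑ k, (y k) ^ 2 + (C * r) * y i - C * (y i) ^ 2) with hθ
  have hwR : ∀ y ∈ closedBall (0 : EuclideanSpace ℝ (Fin N)) r,
      ContDiffAt ℝ 2 (fun y => w (refl_i i y)) y := fun y hy =>
    (hw _ (hRmem y hy)).comp y (refl_i i).contDiff.contDiffAt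
  have hθC : ∀ y ∈ closedBall (0 : EuclideanSpace ℝ (Fin N)) r, ContDiffAt ℝ 2 θ y := fun y hy =>
    ((contDiffAt_const.mul (hw y hy)).sub (contDiffAt_const.mul (hwR y hy))).sub
      (aux_psi_contDiff A (C * r) C i).contDiffAt
  have hproj : Continuous fun y : EuclideanSpace ℝ (Fin N) => y i := by fun_prop
  have hKc : IsCompact (closedBall (0 : EuclideanSpace ℝ (Fin N)) r ∩ {y | 0 ≤ y i}) :=
    (isCompact_closedBall _ _).inter_right (isClosed_le continuous_const hproj)
  obtain ⟨z, ⟨hz1, hz2⟩, hzmax⟩ := hKc.exists_isMaxOn ⟨x, hx, hxi⟩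
    (fun y hy => (hθC y hy.1).continuousAt.continuousWithinAt)
  have hz2 : 0 ≤ z i := hz2
  have hzr : ‖z‖ ≤ r := by simpa using hz1
  have hsq : ∑ k, (z k) ^ 2 = ‖z‖ ^ 2 := by
    rw [EuclideanSpace.norm_sq_eq]; simp
  have hzir : z i ≤ r := by
    have := PiLp.norm_apply_le z i
    rw [Real.norm_eq_abs] at this
    exact (le_abs_self _).trans (this.trans hzr)
  have key : θ z ≤ 0 := by
    by_contra hpos
    push Not at hpos
    have hzi : 0 < z i := by
      rcases hz2.lt_or_eq with h | h
      · exact h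
      exfalso
      have hRz : refl_i i z = z := by
        ext k
        rw [refl_i_apply]
        split_ifs with hk
        · subst hk; rw [← h]; simp
        · rfl
      have : θ z = - (A * ∑ k, (z k) ^ 2) := by
        simp only [hθ, hRz, ← h]; ring
      have h3 : 0 ≤ A * ∑ k, (z k) ^ 2 := mul_nonneg hA0 (Finset.sum_nonneg fun k _ => sq_nonneg _)
      linarith
    have hzr' : ‖z‖ < r := by
      rcases hzr.lt_or_eq with h | h
      · exact h
      exfalso
      have h1 := abs_le.1 (hM z hz1)
      have h2 := abs_le.1 (hM _ (hRmem z hz1))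
      have h3 : A * ∑ k, (z k) ^ 2 = M := by
        rw [hsq, h, hA]; field_simp
      have h4 : 0 ≤ C * z i * (r - z i) := mul_nonneg (mul_nonneg hC0.le hz2) (by linarith)
      have : θ z = ((1/2) * w z - (1/2) * w (refl_i i z)) - (M + C * z i * (r - z i)) := by
        simp only [hθ, h3]; ring
      linarith
    have hloc : IsLocalMax θ z := by
      have h1 : ∀ᶠ y in 𝓝 z, y ∈ ball (0 : EuclideanSpace ℝ (Fin N)) r :=
        isOpen_ball.mem_nhds (by simpa using hzr')
      have h2 : ∀ᶠ y in 𝓝 z, 0 < y i := hproj.continuousAt.eventually (lt_mem_nhds hzi)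
      filter_upwards [h1, h2] with y hy1 hy2
      exact hzmax ⟨ball_subset_closedBall hy1, hy2.le⟩
    have hle := aux_lap_nonpos (hθC z hz1) hloc
    rw [hθ, lap_sub ((contDiffAt_const.mul (hw z hz1)).sub (contDiffAt_const.mul (hwR z hz1)))
      (aux_psi_contDiff A (C * r) C i).contDiffAt,
      lap_sub (contDiffAt_const.mul (hw z hz1)) (contDiffAt_const.mul (hwR z hz1)),
      lap_const_mul (hw z hz1), lap_const_mul (hwR z hz1), lap_refl, aux_psi_lap] at hle
    have h1 := abs_le.1 (hL z hz1)
    have h2 := abs_le.1 (hL _ (hRmem z hz1))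
    rw [hC] at hle
    linarith
  have h5 : θ x ≤ θ z := hzmax ⟨hx, hxi⟩
  have h6 : θ x = ((1/2) * w x - (1/2) * w (refl_i i x)) -
    (A * ∑ k, (x k) ^ 2 + (C * r) * x i - C * (x i) ^ 2) := rfl
  linarith

lemma aux_partial_le {N : ℕ} {w : EuclideanSpace ℝ (Fin N) → ℝ} {r M F : ℝ} (hr : 0 < r)
    (hF : 0 < F) (hw : ∀ y ∈ closedBall (0 : EuclideanSpace ℝ (Fin N)) r, ContDiffAt ℝ 2 w y)
    (hM : ∀ y ∈ closedBall (0 : EuclideanSpace ℝ (Fin N)) r, |w y| ≤ M)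
    (hL : ∀ y ∈ closedBall (0 : EuclideanSpace ℝ (Fin N)) r, |lap w y| ≤ F) (i : Fin N) :
    fderiv ℝ w 0 (EuclideanSpace.single i 1) ≤ (N * (M / r ^ 2) + F) * r := by
  set e : EuclideanSpace ℝ (Fin N) := EuclideanSpace.single i 1 with he
  set A := M / r ^ 2 with hA
  set C := N * A + F with hC
  have hd : HasFDerivAt w (fderiv ℝ w 0) 0 :=
    ((hw 0 (by simp [hr.le])).differentiableAt (by norm_num)).hasFDerivAt
  have hg : ∀ c : ℝ, HasDerivAt (fun t : ℝ => w (t • (c • e))) (fderiv ℝ w 0 (c • e)) 0 := by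
    intro c
    have h1 : HasDerivAt (fun t : ℝ => t • (c • e)) (c • e) 0 := by
      simpa using (hasDerivAt_id (0:ℝ)).smul_const (c • e)
    have h2 : HasFDerivAt w (fderiv ℝ w 0) ((0:ℝ) • (c • e)) := by simpa using hd
    exact h2.comp_hasDerivAt (0:ℝ) h1
  have hh : HasDerivAt (fun t : ℝ => (w (t • ((1:ℝ) • e)) - w (t • ((-1:ℝ) • e))) / 2 -
      (A - C) * t ^ 2) (fderiv ℝ w 0 e) 0 := by
    have := (((hg 1).fun_sub (hg (-1))).div_const 2).fun_sub
      (((hasDerivAt_id (0:ℝ)).fun_pow 2).const_mul (A - C))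
    refine this.congr_deriv ?_
    simp
  have hs := hh.tendsto_slope_zero_right
  refine le_of_tendsto hs ?_
  have hev : ∀ᶠ t : ℝ in 𝓝[>] 0, t ∈ Ioo 0 r := Ioo_mem_nhdsGT hr
  filter_upwards [hev] with t ht
  have hx : t • e ∈ closedBall (0 : EuclideanSpace ℝ (Fin N)) r := by
    simp [he, norm_smul, abs_of_pos ht.1, ht.2.le]
  have hti : (t • e) i = t := by simp [he]
  have := aux_halfball hr hF hw hM hL i (t • e) hx (by rw [hti]; exact ht.1.le)
  have hR : refl_i i (t • e) = t • ((-1 : ℝ) • e) := by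
    rw [map_smul, he, refl_i_single]; simp
  have hsum : ∑ k, ((t • e) k) ^ 2 = t ^ 2 := by
    have h := EuclideanSpace.norm_sq_eq (t • e)
    have h2 : ‖t • e‖ ^ 2 = t ^ 2 := by simp [he, norm_smul]
    rw [← h2, h]; simp only [Real.norm_eq_abs, sq_abs]
  rw [hti, hR, hsum] at this
  have e1 : t⁻¹ * (C * r * t) = C * r := by field_simp [ht.1.ne']
  rw [smul_eq_mul, ← e1]
  refine mul_le_mul_of_nonneg_left ?_ (inv_nonneg.2 ht.1.le)
  simp only [zero_add, zero_smul, sub_self, zero_div, one_smul]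
  linarith

/-- Operator norm bounded by sum of values on the standard basis. -/
lemma aux_opNorm {N : ℕ} {V : Type*} [NormedAddCommGroup V] [NormedSpace ℝ V]
    (L : EuclideanSpace ℝ (Fin N) →L[ℝ] V) {B : ℝ} (hB : 0 ≤ B)
    (h : ∀ i, ‖L (EuclideanSpace.single i 1)‖ ≤ B) : ‖L‖ ≤ N * B := by
  refine L.opNorm_le_bound (by positivity) fun x => ?_
  have hx : x = ∑ i, x i • EuclideanSpace.single i (1:ℝ) := by
    ext k
    simp [Finset.sum_apply, Pi.single_apply]
  have : L x = ∑ i, x i • L (EuclideanSpace.single i (1:ℝ)) := by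
    conv_lhs => rw [hx]
    simp
  rw [this]
  calc ‖∑ i, x i • L (EuclideanSpace.single i (1:ℝ))‖ ≤ ∑ i : Fin N, ‖x‖ * B := by
        refine norm_sum_le_of_le _ fun i _ => ?_
        rw [norm_smul]
        exact mul_le_mul (PiLp.norm_apply_le x i) (h i) (norm_nonneg _) (norm_nonneg _)
    _ = N * B * ‖x‖ := by simp; ring

/-- Interior gradient estimate. -/
lemma grad_est {N : ℕ} {w : EuclideanSpace ℝ (Fin N) → ℝ} {r M F : ℝ} (hr : 0 < r)
    (x : EuclideanSpace ℝ (Fin N))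
    (hw : ∀ y ∈ closedBall x r, ContDiffAt ℝ 2 w y)
    (hM : ∀ y ∈ closedBall x r, |w y| ≤ M)
    (hL : ∀ y ∈ closedBall x r, |lap w y| ≤ F) :
    ‖fderiv ℝ w x‖ ≤ N * ((N * (M / r ^ 2) + F) * r) := by
  have hxm : x ∈ closedBall x r := by simp [hr.le]
  have hM0 : 0 ≤ M := (abs_nonneg _).trans (hM x hxm)
  have hF0 : 0 ≤ F := (abs_nonneg _).trans (hL x hxm)
  have hmem : ∀ y ∈ closedBall (0 : EuclideanSpace ℝ (Fin N)) r, y + x ∈ closedBall x r := by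
    intro y hy
    simpa [mem_closedBall, dist_eq_norm] using hy
  refine aux_opNorm _ (by positivity) fun i => ?_
  refine le_of_forall_pos_le_add fun δ hδ => ?_
  have hδr : 0 < δ / r := by positivity
  set v : EuclideanSpace ℝ (Fin N) → ℝ := fun y => w (y + x) with hv
  have hvC : ∀ y ∈ closedBall (0 : EuclideanSpace ℝ (Fin N)) r, ContDiffAt ℝ 2 v y := fun y hy =>
    (hw _ (hmem y hy)).comp y (contDiff_id.add contDiff_const).contDiffAt
  have hvd : fderiv ℝ v 0 = fderiv ℝ w x := by
    rw [hv, fderiv_comp_add_right, zero_add]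
  have h1 := aux_partial_le (w := v) (M := M) (F := F + δ / r) hr (by positivity) hvC
    (fun y hy => hM _ (hmem y hy))
    (fun y hy => by rw [hv, lap_translate]; exact (hL _ (hmem y hy)).trans (by linarith)) i
  have h2 := aux_partial_le (w := fun y => (-1) * v y) (M := M) (F := F + δ / r) hr (by positivity)
    (fun y hy => contDiffAt_const.mul (hvC y hy))
    (fun y hy => by
      have := hM _ (hmem y hy)
      simpa using this)
    (fun y hy => by
      rw [lap_const_mul (hvC y hy), hv, lap_translate]
      simpa using (hL _ (hmem y hy)).trans (by linarith)) i
  rw [fderiv_const_mul ((hvC 0 (by simp [hr.le])).differentiableAt (by norm_num)), hvd] at h2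
  rw [hvd] at h1
  simp only [_root_.smul_apply, smul_eq_mul] at h2
  have e1 : (N * (M / r ^ 2) + (F + δ / r)) * r = (N * (M / r ^ 2) + F) * r + δ := by
    field_simp
    ring
  rw [e1] at h1 h2
  rw [Real.norm_eq_abs, abs_le]
  constructor <;> linarith

/-- Interior estimate for second derivatives. -/
lemma hess_est {N : ℕ} {w : EuclideanSpace ℝ (Fin N) → ℝ} {r M F : ℝ} (hr : 0 < r)
    (x : EuclideanSpace ℝ (Fin N))
    (hw : ∀ y ∈ ball x (2 * r), ContDiffAt ℝ 2 w y)
    (hM : ∀ y ∈ ball x (2 * r), ‖fderiv ℝ w y‖ ≤ M)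
    (hL : ∀ y ∈ ball x (2 * r), ∀ z ∈ ball x (2 * r), |lap w y - lap w z| ≤ F * ‖y - z‖)
    (hF0 : 0 ≤ F) :
    ‖fderiv ℝ (fderiv ℝ w) x‖ ≤ N * ((N * (M / r ^ 2) + F) * r) := by
  have hxm : x ∈ ball x (2 * r) := by simp [hr]
  have hM0 : 0 ≤ M := (norm_nonneg _).trans (hM x hxm)
  refine norm_fderiv_le_of_lip' ℝ (by positivity) ?_
  filter_upwards [ball_mem_nhds x hr] with x' hx'
  set h := x' - x with hh
  have hhr : ‖h‖ < r := by simpa [dist_eq_norm] using hx'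
  have hm1 : ∀ y ∈ closedBall x r, y ∈ ball x (2 * r) := fun y hy => by
    rw [mem_closedBall] at hy; rw [mem_ball]; linarith
  have hm2 : ∀ y ∈ closedBall x r, y + h ∈ ball x (2 * r) := fun y hy => by
    rw [mem_closedBall] at hy; rw [mem_ball]
    have : dist (y + h) y = ‖h‖ := by simp [dist_eq_norm]
    linarith [dist_triangle (y + h) y x]
  have hwh : ∀ y ∈ closedBall x r, ContDiffAt ℝ 2 (fun y => w (y + h)) y := fun y hy =>
    (hw _ (hm2 y hy)).comp y (contDiff_id.add contDiff_const).contDiffAt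
  have := grad_est (w := fun y => w (y + h) - w y) (M := M * ‖h‖) (F := F * ‖h‖) hr x
    (fun y hy => (hwh y hy).sub (hw y (hm1 y hy)))
    (fun y hy => by
      have := (convex_ball x (2 * r)).norm_image_sub_le_of_norm_fderiv_le (𝕜 := ℝ)
        (fun z hz => (hw z hz).differentiableAt (by norm_num)) hM (hm1 y hy) (hm2 y hy)
      simpa using this)
    (fun y hy => by
      rw [lap_sub (hwh y hy) (hw y (hm1 y hy)), lap_translate]
      simpa using hL _ (hm2 y hy) _ (hm1 y hy))
  have hxc : x ∈ closedBall x r := by simp [hr.le]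
  rw [fderiv_fun_sub ((hwh x hxc).differentiableAt (by norm_num))
    ((hw x hxm).differentiableAt (by norm_num)), fderiv_comp_add_right] at this
  have e1 : x + h = x' := by simp [hh]
  rw [e1] at this
  refine this.trans (le_of_eq ?_)
  ring


theorem aux_cauchy_norm {X V : Type*} [NormedAddCommGroup V] {f : ℕ → X → V} {s : Set X}
    (h : ∀ δ > 0, ∃ n0 : ℕ, ∀ m ≥ n0, ∀ n ≥ n0, ∀ x ∈ s, ‖f m x - f n x‖ < δ) :
    UniformCauchySeqOn f atTop s := by
  rw [Metric.uniformCauchySeqOn_iff]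
  simpa only [dist_eq_norm] using h

lemma aux_exists_limit {X V : Type*} [UniformSpace V] [CompleteSpace V] [Zero V]
    {f : ℕ → X → V} {s : Set X} (h : UniformCauchySeqOn f atTop s) :
    ∃ g, TendstoUniformlyOn f g atTop s := by
  have : ∀ x, ∃ y, x ∈ s → Tendsto (fun n => f n x) atTop (𝓝 y) := by
    intro x
    by_cases hx : x ∈ s
    · obtain ⟨y, hy⟩ := cauchySeq_tendsto_of_complete (h.cauchySeq hx)
      exact ⟨y, fun _ => hy⟩
    · exact ⟨0, fun h => absurd h hx⟩
  choose g hg using this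
  exact ⟨g, h.tendstoUniformlyOn_of_tendsto hg⟩

lemma aux_comp_cauchy {X : Type*} {f : ℕ → X → ℝ} {s : Set X} {K : ℝ} {g : ℝ → ℝ}
    (hg : Continuous g) (h : UniformCauchySeqOn f atTop s) (hK : ∀ j, ∀ x ∈ s, |f j x| ≤ K) :
    UniformCauchySeqOn (fun j x => g (f j x)) atTop s := by
  have huc := (isCompact_Icc (a := -K) (b := K)).uniformContinuousOn_of_continuous hg.continuousOn
  rw [Metric.uniformContinuousOn_iff] at huc
  rw [Metric.uniformCauchySeqOn_iff] at h ⊢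
  intro δ hδ
  obtain ⟨τ, hτ, h1⟩ := huc δ hδ
  obtain ⟨n0, h2⟩ := h τ hτ
  exact ⟨n0, fun m hm n hn x hx => h1 _ (abs_le.1 (hK m x hx)) _ (abs_le.1 (hK n x hx))
    (h2 m hm n hn x hx)⟩

lemma core {N : ℕ} {F : ℝ → ℝ} (hF : ContDiff ℝ 1 F) {r K : ℝ} (hr : 0 < r)
    {a : EuclideanSpace ℝ (Fin N)}
    {v : ℕ → EuclideanSpace ℝ (Fin N) → ℝ} {u : EuclideanSpace ℝ (Fin N) → ℝ}
    (hv : ∀ j, ∀ y ∈ ball a (8 * r), ContDiffAt ℝ 2 (v j) y)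
    (hlap : ∀ j, ∀ y ∈ ball a (8 * r), lap (v j) y = F (v j y))
    (hK : ∀ j, ∀ y ∈ ball a (8 * r), |v j y| ≤ K)
    (hconv : TendstoUniformlyOn v u atTop (ball a (8 * r))) :
    ContDiffAt ℝ 2 u a ∧ lap u a = F (u a) := by
  have hsub1 : ∀ x ∈ ball a (4 * r), ∀ y ∈ closedBall x r, y ∈ ball a (8 * r) := by
    intro x hx y hy
    rw [mem_ball] at *; rw [mem_closedBall] at hy
    linarith [dist_triangle y x a]
  have hsub2 : ∀ x ∈ ball a r, ∀ y ∈ ball x (2 * r), y ∈ ball a (4 * r) := by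
    intro x hx y hy
    rw [mem_ball] at *
    linarith [dist_triangle y x a]
  have hsub3 : ball a (4 * r) ⊆ ball a (8 * r) := ball_subset_ball (by linarith)
  have hsub4 : ball a r ⊆ ball a (4 * r) := ball_subset_ball (by linarith)
  set C : ℝ := N * ((N * (1 / r ^ 2) + 1) * r) with hC
  have hC0 : 0 ≤ C := by positivity
  have hCτ : ∀ τ : ℝ, N * ((N * (τ / r ^ 2) + τ) * r) = C * τ := by
    intro τ; rw [hC]; ring
  have hC1 : ∀ δ > 0, C * (δ / (C + 1)) < δ := by
    intro δ hδ
    rw [mul_div_assoc', div_lt_iff₀ (by positivity)]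
    nlinarith
  have hF' : Continuous (deriv F) := hF.continuous_deriv (by norm_num)
  have hFd : Differentiable ℝ F := hF.differentiable (by norm_num)
  have hc0 := hconv.uniformCauchySeqOn
  have hcF := aux_comp_cauchy hF.continuous hc0 hK
  have hcF' := aux_comp_cauchy hF' hc0 hK
  obtain ⟨K1, hK1⟩ := (isCompact_Icc (a := -K) (b := K)).exists_bound_of_continuousOn
    hF.continuous.continuousOn
  obtain ⟨K2, hK2⟩ := (isCompact_Icc (a := -K) (b := K)).exists_bound_of_continuousOn
    hF'.continuousOn
  have hgb : ∀ j, ∀ x ∈ ball a (4 * r), ‖fderiv ℝ (v j) x‖ ≤ N * ((N * (K / r ^ 2) + K1) * r) :=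
    fun j x hx => grad_est hr x (fun y hy => hv j y (hsub1 x hx y hy))
      (fun y hy => hK j y (hsub1 x hx y hy))
      (fun y hy => by
        rw [hlap j y (hsub1 x hx y hy)]
        exact hK1 _ (abs_le.1 (hK j y (hsub1 x hx y hy))))
  set K3 := N * ((N * (K / r ^ 2) + K1) * r) with hK3
  have ham : a ∈ ball a (4 * r) := by simp [hr]
  have hK30 : 0 ≤ K3 := (norm_nonneg _).trans (hgb 0 a ham)
  have hK20 : 0 ≤ K2 := (norm_nonneg _).trans (hK2 _ (abs_le.1 (hK 0 a (hsub3 ham))))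
  have hc1 : UniformCauchySeqOn (fun j => fderiv ℝ (v j)) atTop (ball a (4 * r)) := by
    rw [Metric.uniformCauchySeqOn_iff] at hc0 hcF ⊢
    intro δ hδ
    have hτ : 0 < δ / (C + 1) := by positivity
    obtain ⟨n1, h1⟩ := hc0 _ hτ
    obtain ⟨n2, h2⟩ := hcF _ hτ
    refine ⟨max n1 n2, fun m hm n hn x hx => ?_⟩
    have hm1 := (le_max_left _ _).trans hm
    have hm2 := (le_max_right _ _).trans hm
    have hn1 := (le_max_left _ _).trans hn
    have hn2 := (le_max_right _ _).trans hn
    have := grad_est (w := fun y => v m y - v n y) (M := δ / (C + 1)) (F := δ / (C + 1)) hr x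
      (fun y hy => (hv m y (hsub1 x hx y hy)).sub (hv n y (hsub1 x hx y hy)))
      (fun y hy => (h1 m hm1 n hn1 y (hsub1 x hx y hy)).le)
      (fun y hy => by
        have hy' := hsub1 x hx y hy
        rw [lap_sub (hv m y hy') (hv n y hy'), hlap m y hy', hlap n y hy']
        exact (h2 m hm2 n hn2 y hy').le)
    have hx8 := hsub3 hx
    rw [fderiv_fun_sub ((hv m x hx8).differentiableAt (by norm_num))
      ((hv n x hx8).differentiableAt (by norm_num)), hCτ] at this
    rw [dist_eq_norm]
    exact this.trans_lt (hC1 δ hδ)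
  have hc2 : UniformCauchySeqOn (fun j => fderiv ℝ (fderiv ℝ (v j))) atTop (ball a r) := by
    have hc1' := hc1
    rw [Metric.uniformCauchySeqOn_iff] at hc1 hcF'
    suffices hsuff : ∀ δ > 0, ∃ n0 : ℕ, ∀ m ≥ n0, ∀ n ≥ n0, ∀ x ∈ ball a r,
        ‖fderiv ℝ (fderiv ℝ (v m)) x - fderiv ℝ (fderiv ℝ (v n)) x‖ < δ by
      exact aux_cauchy_norm (V := EuclideanSpace ℝ (Fin N) →L[ℝ] EuclideanSpace ℝ (Fin N) →L[ℝ] ℝ) hsuff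
    intro δ hδ
    have hτ : 0 < δ / (C + 1) := by positivity
    set τ := δ / (C + 1) with hτd
    obtain ⟨n1, h1⟩ := hc1 (τ / (K2 + K3 + 1)) (by positivity)
    obtain ⟨n2, h2⟩ := hcF' (τ / (K2 + K3 + 1)) (by positivity)
    refine ⟨max n1 n2, fun m hm n hn x hx => ?_⟩
    have hm1 := (le_max_left _ _).trans hm
    have hm2 := (le_max_right _ _).trans hm
    have hn1 := (le_max_left _ _).trans hn
    have hn2 := (le_max_right _ _).trans hn
    have hσ : τ / (K2 + K3 + 1) ≤ τ := div_le_self hτ.le (by linarith)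
    have hd : ∀ j, ∀ y ∈ ball x (2 * r), HasFDerivAt (fun y => F (v j y))
        (deriv F (v j y) • fderiv ℝ (v j) y) y := fun j y hy =>
      (hFd _).hasDerivAt.comp_hasFDerivAt y
        ((hv j y (hsub3 (hsub2 x hx y hy))).differentiableAt (by norm_num)).hasFDerivAt
    have := hess_est (w := fun y => v m y - v n y) (M := τ) (F := τ) hr x
      (fun y hy => (hv m y (hsub3 (hsub2 x hx y hy))).sub (hv n y (hsub3 (hsub2 x hx y hy))))
      (fun y hy => by
        have hy' := hsub3 (hsub2 x hx y hy)
        rw [fderiv_fun_sub ((hv m y hy').differentiableAt (by norm_num))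
          ((hv n y hy').differentiableAt (by norm_num)), ← dist_eq_norm]
        exact (h1 m hm1 n hn1 y (hsub2 x hx y hy)).le.trans hσ)
      (fun y hy z hz => by
        have hy' := hsub3 (hsub2 x hx y hy)
        have hz' := hsub3 (hsub2 x hx z hz)
        rw [lap_sub (hv m y hy') (hv n y hy'), lap_sub (hv m z hz') (hv n z hz'),
          hlap m y hy', hlap n y hy', hlap m z hz', hlap n z hz']
        refine (convex_ball x (2 * r)).norm_image_sub_le_of_norm_hasFDerivWithin_le
          (f := fun y => F (v m y) - F (v n y))
          (fun q hq => ((hd m q hq).fun_sub (hd n q hq)).hasFDerivWithinAt) (fun q hq => ?_) hz hy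
        have hq4 := hsub2 x hx q hq
        have e1 := (h1 m hm1 n hn1 q hq4).le
        have e2 := (h2 m hm2 n hn2 q (hsub3 hq4)).le
        rw [dist_eq_norm] at e1 e2
        have e3 : deriv F (v m q) • fderiv ℝ (v m) q - deriv F (v n q) • fderiv ℝ (v n) q =
          deriv F (v m q) • (fderiv ℝ (v m) q - fderiv ℝ (v n) q) +
          (deriv F (v m q) - deriv F (v n q)) • fderiv ℝ (v n) q := by
          rw [smul_sub, sub_smul]; abel
        rw [e3]
        refine (norm_add_le _ _).trans ?_
        rw [norm_smul, norm_smul]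
        have e4 := mul_le_mul (hK2 _ (abs_le.1 (hK m q (hsub3 hq4)))) e1 (norm_nonneg _) hK20
        have e5 := mul_le_mul e2 (hgb n q hq4) (norm_nonneg _) (by positivity)
        have e6 : K2 * (τ / (K2 + K3 + 1)) + τ / (K2 + K3 + 1) * K3 + τ / (K2 + K3 + 1) = τ := by
          field_simp
        have e7 : 0 ≤ τ / (K2 + K3 + 1) := by positivity
        linarith) hτ.le
    have hfe : fderiv ℝ (fun y => v m y - v n y) =ᶠ[𝓝 x]
        fun y => fderiv ℝ (v m) y - fderiv ℝ (v n) y := by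
      filter_upwards [isOpen_ball.mem_nhds hx] with y hy
      have hy' := hsub3 (hsub4 hy)
      exact fderiv_fun_sub ((hv m y hy').differentiableAt (by norm_num))
          ((hv n y hy').differentiableAt (by norm_num))
    have hx8 := hsub3 (hsub4 hx)
    rw [hfe.fderiv_eq, fderiv_fun_sub (aux_diff1 (hv m x hx8)) (aux_diff1 (hv n x hx8)),
      hCτ] at this
    exact this.trans_lt (hC1 δ hδ)
  obtain ⟨G, hG⟩ := aux_exists_limit (hc1.mono hsub4)
  obtain ⟨H, hH⟩ := aux_exists_limit hc2
  have hs : IsOpen (ball a r) := isOpen_ball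
  have hS8 : ball a r ⊆ ball a (8 * r) := hsub4.trans hsub3
  have hdu : ∀ x ∈ ball a r, HasFDerivAt u (G x) x := fun x hx =>
    hasFDerivAt_of_tendstoUniformlyOn hs hG
      (fun j y hy => ((hv j y (hS8 hy)).differentiableAt (by norm_num)).hasFDerivAt)
      (fun y hy => hconv.tendsto_at (hS8 hy)) hx
  have hdG : ∀ x ∈ ball a r, HasFDerivAt G (H x) x := fun x hx =>
    hasFDerivAt_of_tendstoUniformlyOn hs hH
      (fun j y hy => (aux_diff1 (hv j y (hS8 hy))).hasFDerivAt)
      (fun y hy => hG.tendsto_at hy) hx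
  have hHc : ContinuousOn H (ball a r) := by
    refine hH.continuousOn (Eventually.of_forall fun j => ?_).frequently
    intro y hy
    have h1 := (hv j y (hS8 hy)).fderiv_right (m := 1) (by norm_num)
    have h2 := h1.fderiv_right (m := 0) (by norm_num)
    exact h2.continuousAt.continuousWithinAt
  have har : a ∈ ball a r := by simp [hr]
  have hG1 : ContDiffOn ℝ 1 G (ball a r) := by
    rw [show (1 : WithTop ℕ∞) = 0 + 1 by norm_num, contDiffOn_succ_iff_fderiv_of_isOpen hs]
    refine ⟨fun x hx => (hdG x hx).differentiableAt.differentiableWithinAt, by simp, ?_⟩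
    rw [contDiffOn_zero]
    exact hHc.congr fun x hx => (hdG x hx).fderiv
  have hu2 : ContDiffOn ℝ 2 u (ball a r) := by
    rw [show (2 : WithTop ℕ∞) = 1 + 1 by norm_num, contDiffOn_succ_iff_fderiv_of_isOpen hs]
    refine ⟨fun x hx => (hdu x hx).differentiableAt.differentiableWithinAt, by simp, ?_⟩
    exact hG1.congr fun x hx => (hdu x hx).fderiv
  have hua : ContDiffAt ℝ 2 u a := hu2.contDiffAt (hs.mem_nhds har)
  refine ⟨hua, ?_⟩
  have hfe : fderiv ℝ u =ᶠ[𝓝 a] G := by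
    filter_upwards [hs.mem_nhds har] with y hy using (hdu y hy).fderiv
  have hlim1 : Tendsto (fun j => lap (v j) a) atTop (𝓝 (lap u a)) := by
    rw [lap_eq hua, hfe.fderiv_eq, (hdG a har).fderiv]
    have : (fun j => lap (v j) a) = fun j => ∑ i : Fin N,
        fderiv ℝ (fderiv ℝ (v j)) a (EuclideanSpace.single i 1) (EuclideanSpace.single i 1) :=
      funext fun j => lap_eq (hv j a (hS8 har))
    rw [this]
    refine tendsto_finsetSum _ fun i _ => ?_
    have h0 : Tendsto (fun j => fderiv ℝ (fderiv ℝ (v j)) a) atTop (𝓝 (H a)) := hH.tendsto_at har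
    have h1 : Continuous (fun L : EuclideanSpace ℝ (Fin N) →L[ℝ] EuclideanSpace ℝ (Fin N) →L[ℝ] ℝ =>
        L (EuclideanSpace.single i 1) (EuclideanSpace.single i 1)) := by fun_prop
    exact (h1.tendsto (H a)).comp h0
  have hlim2 : Tendsto (fun j => lap (v j) a) atTop (𝓝 (F (u a))) := by
    have : (fun j => lap (v j) a) = fun j => F (v j a) :=
      funext fun j => hlap j a (hS8 har)
    rw [this]
    exact (hF.continuous.tendsto _).comp (hconv.tendsto_at (hS8 har))
  exact tendsto_nhds_unique hlim1 hlim2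

lemma local_core {N : ℕ} {Ω : Set (EuclideanSpace ℝ (Fin N))} (hΩo : IsOpen Ω)
    {F : ℝ → ℝ} (hF : ContDiff ℝ 1 F)
    {useq : ℕ → EuclideanSpace ℝ (Fin N) → ℝ}
    (huC2 : ∀ j, ContDiffOn ℝ 2 (useq j) Ω) {u : EuclideanSpace ℝ (Fin N) → ℝ}
    (hconv : TendstoLocallyUniformlyOn useq u atTop Ω)
    {a : EuclideanSpace ℝ (Fin N)} {ρ : ℝ} (hρ : 0 < ρ) (hsub : closedBall a ρ ⊆ Ω)
    (hlap : ∀ᶠ j in atTop, ∀ y ∈ closedBall a ρ, lap (useq j) y = F (useq j y)) :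
    ContDiffAt ℝ 2 u a ∧ lap u a = F (u a) := by
  have hcpt := isCompact_closedBall a ρ
  have hunif : TendstoUniformlyOn useq u atTop (closedBall a ρ) :=
    (tendstoLocallyUniformlyOn_iff_forall_isCompact hΩo).1 hconv _ hsub hcpt
  have huc : ContinuousOn u Ω :=
    hconv.continuousOn (Eventually.of_forall fun j => (huC2 j).continuousOn).frequently
  obtain ⟨K, hK⟩ := hcpt.exists_bound_of_continuousOn (huc.mono hsub)
  have hev := hlap.and ((Metric.tendstoUniformlyOn_iff.1 hunif) 1 one_pos)
  obtain ⟨n0, hn0⟩ := eventually_atTop.1 hev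
  have hb : ball a (8 * (ρ / 8)) ⊆ closedBall a ρ := by
    rw [show 8 * (ρ / 8) = ρ by ring]; exact ball_subset_closedBall
  refine core hF (r := ρ / 8) (K := K + 1) (by positivity) (v := fun j => useq (j + n0)) ?_ ?_ ?_ ?_
  · exact fun j y hy => (huC2 _).contDiffAt (hΩo.mem_nhds (hsub (hb hy)))
  · exact fun j y hy => (hn0 (j + n0) (by omega)).1 y (hb hy)
  · intro j y hy
    have h1 := (hn0 (j + n0) (by omega)).2 y (hb hy)
    have h2 := hK y (hb hy)
    rw [Real.dist_eq, abs_lt] at h1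
    rw [Real.norm_eq_abs, abs_le] at h2
    rw [abs_le]
    constructor <;> linarith
  · intro s hs
    exact (tendsto_add_atTop_nat n0).eventually ((hunif.mono hb) s hs)

theorem stmt_15 {N : ℕ} (hN : 2 ≤ N) (Ω : Set (EuclideanSpace ℝ (Fin N)))
    (hΩo : IsOpen Ω) (p : ℝ) (hp : 2 < p)
    (β : ℝ → ℝ) (hβc : Continuous β) (hβ0 : ∀ s ∉ Set.Ioo (0 : ℝ) 1, β s = 0)
    (ε : ℕ → ℝ) (hε : ∀ j, ε j ∈ Set.Ioc (0 : ℝ) 1)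
    (hεlim : Tendsto ε atTop (nhds 0))
    (useq : ℕ → EuclideanSpace ℝ (Fin N) → ℝ)
    (huC2 : ∀ j, ContDiffOn ℝ 2 (useq j) Ω)
    (hueq : ∀ j, ∀ x ∈ Ω, lap (useq j) x
      = (1 / ε j) * β ((useq j x - 1) / ε j) - (max (useq j x - 1) 0) ^ (p - 1))
    (u : EuclideanSpace ℝ (Fin N) → ℝ)
    (hconv : TendstoLocallyUniformlyOn useq u atTop Ω) :
    (ContDiffOn ℝ 2 u {x ∈ Ω | 1 < u x}
      ∧ ∀ x ∈ {x ∈ Ω | 1 < u x}, -lap u x = (u x - 1) ^ (p - 1))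
    ∧ (ContDiffOn ℝ 2 u {x ∈ Ω | u x < 1}
      ∧ ∀ x ∈ {x ∈ Ω | u x < 1}, lap u x = 0) := by
  have huc : ContinuousOn u Ω :=
    hconv.continuousOn (Eventually.of_forall fun j => (huC2 j).continuousOn).frequently
  have h1 : ∀ a ∈ {x ∈ Ω | 1 < u x}, ContDiffAt ℝ 2 u a ∧ lap u a = -(u a - 1) ^ (p - 1) := by
    rintro a ⟨haΩ, hua⟩
    set δ := (u a - 1) / 3 with hδ
    have hδ0 : 0 < δ := by rw [hδ]; linarith
    have hca : ContinuousAt u a := huc.continuousAt (hΩo.mem_nhds haΩ)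
    have hnh : {y | 1 + 2 * δ < u y} ∩ Ω ∈ 𝓝 a :=
      inter_mem (hca.eventually (lt_mem_nhds (by rw [hδ]; linarith))) (hΩo.mem_nhds haΩ)
    obtain ⟨ρ, hρ, hsub⟩ := Metric.nhds_basis_closedBall.mem_iff.1 hnh
    have hsubΩ : closedBall a ρ ⊆ Ω := fun y hy => (hsub hy).2
    have hunif : TendstoUniformlyOn useq u atTop (closedBall a ρ) :=
      (tendstoLocallyUniformlyOn_iff_forall_isCompact hΩo).1 hconv _ hsubΩ (isCompact_closedBall a ρ)
    have hF : ContDiff ℝ 1 (fun s : ℝ => -(s - 1) ^ (p - 1)) := by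
      have := Real.contDiff_rpow_const_of_le (p := p - 1) (n := 1) (by norm_num; linarith)
      exact ((this.comp (contDiff_id.sub contDiff_const)).neg)
    refine local_core hΩo hF huC2 hconv hρ hsubΩ ?_
    filter_upwards [(Metric.tendstoUniformlyOn_iff.1 hunif) δ hδ0,
      hεlim.eventually (gt_mem_nhds hδ0)] with j hj1 hj2 y hy
    have hy1 := hj1 y hy
    rw [Real.dist_eq, abs_lt] at hy1
    have hy2 : 1 + 2 * δ < u y := (hsub hy).1
    have hεj := (hε j).1
    rw [hueq j y (hsubΩ hy), hβ0, max_eq_left (by linarith)]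
    · ring
    · intro hmem
      have := hmem.2
      rw [div_lt_one hεj] at this
      linarith
  have h2 : ∀ a ∈ {x ∈ Ω | u x < 1}, ContDiffAt ℝ 2 u a ∧ lap u a = 0 := by
    rintro a ⟨haΩ, hua⟩
    set δ := (1 - u a) / 3 with hδ
    have hδ0 : 0 < δ := by rw [hδ]; linarith
    have hca : ContinuousAt u a := huc.continuousAt (hΩo.mem_nhds haΩ)
    have hnh : {y | u y < 1 - 2 * δ} ∩ Ω ∈ 𝓝 a :=
      inter_mem (hca.eventually (gt_mem_nhds (by rw [hδ]; linarith))) (hΩo.mem_nhds haΩ)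
    obtain ⟨ρ, hρ, hsub⟩ := Metric.nhds_basis_closedBall.mem_iff.1 hnh
    have hsubΩ : closedBall a ρ ⊆ Ω := fun y hy => (hsub hy).2
    have hunif : TendstoUniformlyOn useq u atTop (closedBall a ρ) :=
      (tendstoLocallyUniformlyOn_iff_forall_isCompact hΩo).1 hconv _ hsubΩ (isCompact_closedBall a ρ)
    refine local_core (F := fun _ => 0) hΩo contDiff_const huC2 hconv hρ hsubΩ ?_
    filter_upwards [(Metric.tendstoUniformlyOn_iff.1 hunif) δ hδ0] with j hj1 y hy
    have hy1 := hj1 y hy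
    rw [Real.dist_eq, abs_lt] at hy1
    have hy2 : u y < 1 - 2 * δ := (hsub hy).1
    have hεj := (hε j).1
    rw [hueq j y (hsubΩ hy), hβ0, max_eq_right (by linarith), Real.zero_rpow (by linarith)]
    · ring
    · intro hmem
      have := (div_pos_iff_of_pos_right hεj).1 hmem.1
      linarith
  refine ⟨⟨fun x hx => (h1 x hx).1.contDiffWithinAt, fun x hx => ?_⟩,
    fun x hx => (h2 x hx).1.contDiffWithinAt, fun x hx => (h2 x hx).2⟩
  rw [(h1 x hx).2, neg_neg]
end

section
/- Let N ≥ 2, let Ω ⊂ ℝ^N be a bounded open connected set, let p > 2, let ε > 0, and let β : ℝ → ℝ be a continuous function with β(s) ≥ 0 for all s and β(s) = 0 for s ≤ 0. Let u be continuous on the closure of Ω, twice continuously differentiable on Ω, with u = 0 on ∂Ω and Δu(x) = (1/ε)β((u(x)−1)/ε) − (u(x)−1)_+^{p−1} for all x ∈ Ω. If u(x) ≤ 1 for all x ∈ Ω, then u is identically zero on Ω. In particular, every nontrivial such solution satisfies u(x₀) > 1 for some x₀ ∈ Ω. -/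
open MeasureTheory Metric Set

open Filter Topology

theorem aux_second_deriv {f : ℝ → ℝ} {a : ℝ} (h : IsLocalMax f a) (hc : ContinuousAt f a) :
    deriv (deriv f) a ≤ 0 := by
  by_contra hpos
  push Not at hpos
  have hmin := isLocalMin_of_deriv_deriv_pos hpos h.deriv_eq_zero hc
  have he : f =ᶠ[𝓝 a] fun _ => f a := by
    filter_upwards [h, hmin] with y h1 h2
    exact le_antisymm h1 h2
  have h2 : deriv (deriv f) a = 0 := by
    rw [he.deriv.deriv_eq]
    simp
  linarith

theorem aux_partial {N : ℕ} {Ω : Set (EuclideanSpace ℝ (Fin N))} (hΩo : IsOpen Ω)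
    {u : EuclideanSpace ℝ (Fin N) → ℝ} (huC2 : ContDiffOn ℝ 2 u Ω)
    {x : EuclideanSpace ℝ (Fin N)} (hx : x ∈ Ω) (δ : ℝ)
    (hmax : IsLocalMax (fun y => u y + δ * ‖y‖ ^ 2) x) (e : EuclideanSpace ℝ (Fin N))
    (he : ‖e‖ = 1) :
    fderiv ℝ (fun y => fderiv ℝ u y e) x e ≤ - (2 * δ) := by
  have hline : ∀ t : ℝ, HasDerivAt (fun t : ℝ => x + t • e) e t := by
    intro t
    simpa using ((hasDerivAt_id t).smul_const e).const_add x
  have hcont : Tendsto (fun t : ℝ => x + t • e) (𝓝 0) (𝓝 x) := by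
    have := (hline 0).continuousAt.tendsto
    simpa using this
  have hmem : ∀ᶠ t : ℝ in 𝓝 0, x + t • e ∈ Ω := hcont.eventually (hΩo.mem_nhds hx)
  have hq : ∀ t : ℝ, HasDerivAt (fun t : ℝ => δ * ‖x + t • e‖ ^ 2)
      (δ * (2 * inner ℝ x e + 2 * t)) t := by
    intro t
    have h1 : (fun t : ℝ => δ * ‖x + t • e‖ ^ 2)
        = fun t : ℝ => δ * (‖x‖ ^ 2 + 2 * (t * inner ℝ x e) + t ^ 2) := by
      funext t
      rw [norm_add_sq_real, inner_smul_right, norm_smul, he]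
      simp
    rw [h1]
    have := ((((hasDerivAt_id t).mul_const (inner ℝ x e)).const_mul 2).const_add
      (‖x‖ ^ 2)).add ((hasDerivAt_id t).pow 2) |>.const_mul δ
    refine this.congr_deriv ?_
    simp
  have hdu : ∀ y ∈ Ω, DifferentiableAt ℝ u y := fun y hy =>
    (huC2.contDiffAt (hΩo.mem_nhds hy)).differentiableAt (by norm_num)
  have hddu : DifferentiableAt ℝ (fun y => fderiv ℝ u y e) x := by
    have h1 : ContDiffAt ℝ 1 (fderiv ℝ u) x :=
      (huC2.contDiffAt (hΩo.mem_nhds hx)).fderiv_right (by norm_num)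
    exact (h1.differentiableAt (by norm_num)).clm_apply (differentiableAt_const e)
  set f : ℝ → ℝ := fun t => u (x + t • e) + δ * ‖x + t • e‖ ^ 2 with hf
  have hd : ∀ t : ℝ, x + t • e ∈ Ω →
      HasDerivAt f (fderiv ℝ u (x + t • e) e + δ * (2 * inner ℝ x e + 2 * t)) t := by
    intro t ht
    exact ((hdu _ ht).hasFDerivAt.comp_hasDerivAt t (hline t)).add (hq t)
  have hd1 : deriv f =ᶠ[𝓝 0]
      fun t => fderiv ℝ u (x + t • e) e + δ * (2 * inner ℝ x e + 2 * t) := by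
    filter_upwards [hmem] with t ht
    exact (hd t ht).deriv
  have hloc : IsLocalMax f 0 := by
    have := hcont.eventually hmax
    filter_upwards [this] with t ht
    simpa [hf] using ht
  have h2 := aux_second_deriv hloc (hd 0 (by simpa using hx)).continuousAt
  rw [hd1.deriv_eq] at h2
  have hx0 : HasFDerivAt (fun y => fderiv ℝ u y e) (fderiv ℝ (fun y => fderiv ℝ u y e) x)
      (x + (0 : ℝ) • e) := by
    simpa using hddu.hasFDerivAt
  have h3 : HasDerivAt (fun t : ℝ => fderiv ℝ u (x + t • e) e)
      (fderiv ℝ (fun y => fderiv ℝ u y e) x e) 0 :=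
    HasFDerivAt.comp_hasDerivAt (f := fun t : ℝ => x + t • e) 0 hx0 (hline 0)
  have h4 : HasDerivAt (fun t : ℝ => δ * (2 * inner ℝ x e + 2 * t)) (δ * 2) 0 := by
    simpa using ((((hasDerivAt_id (0 : ℝ)).const_mul 2).const_add (2 * inner ℝ x e)).const_mul δ)
  have h5 := (h3.add h4).deriv
  have h6 : deriv (fun t : ℝ => fderiv ℝ u (x + t • e) e + δ * (2 * inner ℝ x e + 2 * t)) 0
    = fderiv ℝ (fun y => fderiv ℝ u y e) x e + δ * 2 := h5
  rw [h6] at h2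
  linarith

theorem aux_max {N : ℕ} (hN : 2 ≤ N) {Ω : Set (EuclideanSpace ℝ (Fin N))}
    (hΩo : IsOpen Ω) (hΩb : Bornology.IsBounded Ω)
    {u : EuclideanSpace ℝ (Fin N) → ℝ}
    (huc : ContinuousOn u (closure Ω)) (huC2 : ContDiffOn ℝ 2 u Ω)
    (hbdry : ∀ x ∈ frontier Ω, u x = 0)
    (hueq : ∀ x ∈ Ω, lap u x = 0) : ∀ x ∈ Ω, u x ≤ 0 := by
  intro x₀ hx₀
  by_contra hpos
  push Not at hpos
  obtain ⟨R, hR⟩ := hΩb.closure.exists_norm_le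
  set δ : ℝ := u x₀ / (2 * (R ^ 2 + 1)) with hδ
  have hR1 : 0 < R ^ 2 + 1 := by positivity
  have hδ0 : 0 < δ := by positivity
  have hδR : δ * R ^ 2 < u x₀ := by
    have h1 : δ * (2 * (R ^ 2 + 1)) = u x₀ := by
      rw [hδ]; field_simp
    nlinarith [sq_nonneg R]
  have hcpt : IsCompact (closure Ω) := hΩb.isCompact_closure
  obtain ⟨x, hxc, hxmax⟩ := hcpt.exists_isMaxOn ⟨x₀, subset_closure hx₀⟩
    (f := fun y => u y + δ * ‖y‖ ^ 2) (huc.add (by fun_prop))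
  have hge : u x₀ + δ * ‖x₀‖ ^ 2 ≤ u x + δ * ‖x‖ ^ 2 := hxmax (subset_closure hx₀)
  have hx : x ∈ Ω := by
    by_contra hnx
    have h0 := hbdry x ⟨hxc, by rwa [hΩo.interior_eq]⟩
    have h1 : ‖x‖ ^ 2 ≤ R ^ 2 := pow_le_pow_left₀ (norm_nonneg _) (hR x hxc) 2
    have h2 : 0 ≤ δ * ‖x₀‖ ^ 2 := by positivity
    have h3 := mul_le_mul_of_nonneg_left h1 hδ0.le
    linarith
  have hloc : IsLocalMax (fun y => u y + δ * ‖y‖ ^ 2) x :=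
    hxmax.isLocalMax (mem_of_superset (hΩo.mem_nhds hx) subset_closure)
  have hsum : lap u x ≤ ∑ _i : Fin N, -(2 * δ) :=
    Finset.sum_le_sum fun i _ => aux_partial hΩo huC2 hx δ hloc _ (by simp)
  rw [hueq x hx] at hsum
  simp only [Finset.sum_const, Finset.card_univ, Fintype.card_fin, nsmul_eq_mul] at hsum
  have hN' : (2 : ℝ) ≤ N := by exact_mod_cast hN
  nlinarith

theorem aux_lap_neg {N : ℕ} (u : EuclideanSpace ℝ (Fin N) → ℝ)
    (x : EuclideanSpace ℝ (Fin N)) : lap (fun y => - u y) x = - lap u x := by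
  simp [lap, fderiv_fun_neg]

theorem stmt_16 {N : ℕ} (hN : 2 ≤ N) (Ω : Set (EuclideanSpace ℝ (Fin N)))
    (hΩo : IsOpen Ω) (hΩb : Bornology.IsBounded Ω) (hΩc : IsConnected Ω)
    (p : ℝ) (hp : 2 < p) (ε : ℝ) (hε : 0 < ε)
    (β : ℝ → ℝ) (hβc : Continuous β) (hβ0 : ∀ s, 0 ≤ β s)
    (hβneg : ∀ s ≤ (0 : ℝ), β s = 0)
    (u : EuclideanSpace ℝ (Fin N) → ℝ)
    (huc : ContinuousOn u (closure Ω)) (huC2 : ContDiffOn ℝ 2 u Ω)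
    (hbdry : ∀ x ∈ frontier Ω, u x = 0)
    (hueq : ∀ x ∈ Ω, lap u x
      = (1 / ε) * β ((u x - 1) / ε) - (max (u x - 1) 0) ^ (p - 1)) :
    ((∀ x ∈ Ω, u x ≤ 1) → ∀ x ∈ Ω, u x = 0)
      ∧ ((∃ x ∈ Ω, u x ≠ 0) → ∃ x₀ ∈ Ω, 1 < u x₀) := by
  have key : (∀ x ∈ Ω, u x ≤ 1) → ∀ x ∈ Ω, u x = 0 := by
    intro hle
    have hlap : ∀ x ∈ Ω, lap u x = 0 := by
      intro x hx
      have h1 := hle x hx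
      rw [hueq x hx, hβneg _ (div_nonpos_of_nonpos_of_nonneg (by linarith) hε.le),
        max_eq_right (by linarith), Real.zero_rpow (by linarith)]
      simp
    intro x hx
    have h1 := aux_max hN hΩo hΩb huc huC2 hbdry hlap x hx
    have h2 := aux_max hN hΩo hΩb (u := fun y => - u y) huc.neg huC2.neg
      (fun y hy => by simp [hbdry y hy])
      (fun y hy => by rw [aux_lap_neg, hlap y hy, neg_zero]) x hx
    linarith
  refine ⟨key, ?_⟩
  rintro ⟨x, hx, hne⟩
  by_contra hcon
  push Not at hcon
  exact hne (key hcon x hx)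
end
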